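/- arXiv:1503.03114 — 12 statements merged into one kernel-verified Lean document; each statement's English description precedes it below -/
import Mathlib

section
/- For all x, y ∈ ℝ one has R_ab(x,y) = F(x,y), i.e. sSup { τ(f·g) : τ(f) = x, τ(g) = y } = sSup { (p₁+p₂+1)/q : q a positive integer, p₁, p₂ integers with p₁ ≤ q·x and p₂ ≤ q·y }. -/
/-!
The identity is proved by two inequalities.

*`F ≤ Rab`.* Given `p₁ ≤ q x` and `p₂ ≤ q y`, take circle homeomorphisms `A`, `B` (lifted) with
translation numbers `q x`, `q y` such that `A` moves the point `1/4` by at least `p₁ + 1/2` and `B`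
moves `3/4` by at least `p₂ + 1/2` (`exists_unit_displacement`). Then `A B` moves `3/4` by at least
`p₁ + p₂ + 1`. Rescaling by `q`, i.e. passing to `t ↦ A (q t) / q`, divides all three translation
numbers by `q`.

*`Rab ≤ F`.* Let `p / q < τ (f g)`. An orbit of `f g` provides a monotone sequence `a : ℤ → ℝ` with
`a (i + q) = a i + 1` and `a (i + p) ≤ f (g (a i))` (`exists_labelling`). Recording how the points
`g (a j)` sit among the `a k` gives a monotone `φ : ℤ → ℤ` commuting with `· + q`, namely
`a k ≤ g (a j) ↔ k ≤ φ j`, and a quasi-inverse `ψ` with `φ j < k ↔ j ≤ ψ k`. On indices, `g` moves at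
least as fast as `φ`, and `f` at least as fast as `ψ + p`. It remains to find `N, p₁, p₂` with
`(p₁ + p₂ + 1) / N ≥ p / q` such that `φ` and `ψ + p` move at least `p₂ q` and `p₁ q` in `N` steps.
This is `exists_fraction`, by strong induction on `q`:

* if `ψ + p` is surjective, then `ψ` and `φ` are translations, by amounts `c` and `-c - 1`, and
  `N = q` works with equality;
* otherwise replace `f = ψ + p` by the larger map that first rounds up to the range of `f` and then
  applies `f`. The new composition has all its orbits in the range of `f`, which misses a residue
  class mod `q`, so it has a periodic orbit of period less than `q`, whose translation number is at
  least `p / q`. The index maps of this orbit are dominated by those of the old system, and the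
  induction hypothesis applies to them.
-/

/-- Translation number of a lift of an orientation-preserving circle homeomorphism
(an invertible element of the monoid `CircleDeg1Lift`). -/
noncomputable def tau (f : CircleDeg1Liftˣ) : ℝ :=
  CircleDeg1Lift.translationNumber (f : CircleDeg1Lift)

/-- `Rab x y` is the supremum of translation numbers of compositions `f * g` where
`τ(f) = x` and `τ(g) = y`. -/
noncomputable def Rab (x y : ℝ) : ℝ :=
  sSup {t : ℝ | ∃ f g : CircleDeg1Liftˣ, tau f = x ∧ tau g = y ∧ tau (f * g) = t}

/-- The explicit Calegari--Walker formula. -/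
noncomputable def F (x y : ℝ) : ℝ :=
  sSup {t : ℝ | ∃ q : ℕ, 0 < q ∧ ∃ p₁ p₂ : ℤ,
    (p₁ : ℝ) ≤ q * x ∧ (p₂ : ℝ) ≤ q * y ∧ t = ((p₁ : ℝ) + (p₂ : ℝ) + 1) / q}

/-! ### Monotone maps commuting with a translation -/

section Order

variable {Λ : Type*} [AddCommGroup Λ]

lemma map_add_zsmul_of_map_add {h : Λ → Λ} {c : Λ} (hc : ∀ t, h (t + c) = h t + c)
    (r : ℤ) (t : Λ) : h (t + r • c) = h t + r • c := by
  induction r using Int.induction_on with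
  | zero => simp
  | succ n ih => rw [add_zsmul, one_zsmul, ← add_assoc, hc, ih, add_assoc]
  | pred n ih =>
    have := hc (t + (-(n : ℤ) - 1) • c)
    rw [add_assoc, sub_zsmul, one_zsmul, neg_add_cancel_right, ih] at this
    rw [sub_zsmul, one_zsmul, eq_sub_of_add_eq this.symm]
    abel

lemma seq_add_mul {u : ℤ → Λ} {q : ℤ} {c : Λ} (hu : ∀ i, u (i + q) = u i + c)
    (n i : ℤ) : u (i + n * q) = u i + n • c := by
  induction n using Int.induction_on with
  | zero => simp
  | succ n ih => rw [add_mul, one_mul, ← add_assoc, hu, ih, add_zsmul, one_zsmul, add_assoc]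
  | pred n ih =>
    have := hu (i + (-(n : ℤ) - 1) * q)
    rw [add_assoc, sub_mul, one_mul, sub_add_cancel, ih] at this
    rw [sub_zsmul, one_zsmul, sub_mul, one_mul, eq_sub_of_add_eq this.symm]
    abel

variable [LinearOrder Λ]

/-- If `w` acts along the sequence `v` at least as fast as `W` acts on indices, then a displacement
`n q` of `W^[N]` forces a displacement `n • c` of `w^[N]`. -/
lemma le_iterate_of_le_map {w : Λ → Λ} (hw : Monotone w) {W : ℤ → ℤ} {v : ℤ → Λ}
    (hv : Monotone v) {q : ℤ} {c : Λ} (hvc : ∀ i, v (i + q) = v i + c)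
    (h : ∀ k, v (W k) ≤ w (v k)) {N : ℕ} {n k : ℤ} (hk : k + n * q ≤ W^[N] k) :
    v k + n • c ≤ w^[N] (v k) := by
  have key : ∀ N : ℕ, v (W^[N] k) ≤ w^[N] (v k) := fun N => by
    induction N with
    | zero => rfl
    | succ N ih =>
      rw [Function.iterate_succ_apply', Function.iterate_succ_apply']
      exact (h _).trans (hw ih)
  rw [← seq_add_mul hvc]
  exact (hv hk).trans (key N)

variable [IsOrderedAddMonoid Λ]

/-- The labelling of an orbit. If `h` moves `t` by at least `l • c` in `m` steps, then the points
`h^[s] t + r • c` (`s < m`), labelled by the integers `s l + r m`, yield a monotone sequence along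
which `h` raises the index by at least `l`: the `i`-th term is the largest point with label at most
`i`. -/
lemma exists_labelling {h : Λ → Λ} (hm : Monotone h) {c : Λ} (hc0 : 0 ≤ c)
    (hc : ∀ t, h (t + c) = h t + c) {m : ℕ} (hm0 : 0 < m) {l : ℤ} {t : Λ}
    (ht : t + l • c ≤ h^[m] t) :
    ∃ a : ℤ → Λ, Monotone a ∧ (∀ i, a (i + m) = a i + c) ∧ (∀ i, a (i + l) ≤ h (a i)) ∧
      ∀ i, ∃ (s : ℕ) (r : ℤ), a i = h^[s] t + r • c := by
  have hmz : (0 : ℤ) < m := by exact_mod_cast hm0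
  have hne : (Finset.range m).Nonempty := Finset.nonempty_range_iff.2 hm0.ne'
  let T : ℤ → ℕ → Λ := fun i s => h^[s] t + ((i - s * l) / m) • c
  let a : ℤ → Λ := fun i => (Finset.range m).sup' hne (T i)
  have hTa : ∀ i s, s < m → T i s ≤ a i := fun i s hs =>
    Finset.le_sup' (T i) (Finset.mem_range.2 hs)
  have haT : ∀ i, ∃ s, s < m ∧ a i = T i s := fun i => by
    obtain ⟨s, hs, e⟩ := Finset.exists_mem_eq_sup' hne (T i)
    exact ⟨s, Finset.mem_range.1 hs, e⟩
  have hTm : ∀ i s, T (i + m) s = T i s + c := fun i s => by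
    have : (i + m - s * l) / (m : ℤ) = (i - s * l) / m + 1 := by
      rw [show i + m - s * l = (i - s * l) + m by ring, Int.add_ediv_of_dvd_right dvd_rfl,
        Int.ediv_self hmz.ne']
    simp only [T, this, add_zsmul, one_zsmul, add_assoc]
  refine ⟨a, ?_, ?_, ?_, ?_⟩
  · intro i j hij
    obtain ⟨s, hs, e⟩ := haT i
    rw [e]
    refine le_trans ?_ (hTa j s hs)
    have : (i - s * l) / (m : ℤ) ≤ (j - s * l) / m := Int.ediv_le_ediv hmz (by linarith)
    exact add_le_add_right (zsmul_le_zsmul_left hc0 this) _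
  · intro i
    apply le_antisymm
    · obtain ⟨s, hs, e⟩ := haT (i + m)
      rw [e, hTm]
      exact add_le_add_left (hTa i s hs) _
    · obtain ⟨s, hs, e⟩ := haT i
      rw [e, ← hTm]
      exact hTa _ s hs
  · intro i
    obtain ⟨s, hs, e⟩ := haT (i + l)
    rw [e]
    rcases s with _ | s
    · -- The point with `s = 0` is compared with the image of a point with `s = m - 1`.
      obtain ⟨n, rfl⟩ : ∃ n, m = n + 1 := ⟨m - 1, by omega⟩
      refine le_trans ?_ (hm (hTa i n (by omega)))
      simp only [T]
      rw [map_add_zsmul_of_map_add hc, ← Function.iterate_succ_apply' h]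
      have : (i - n * l) / ((n + 1 : ℕ) : ℤ) = (i + l) / ((n + 1 : ℕ) : ℤ) + -l := by
        rw [← Int.add_mul_ediv_right _ _ hmz.ne']
        congr 1; push_cast; ring
      rw [this, add_zsmul, neg_zsmul]
      simp only [Function.iterate_zero, id_eq, Nat.cast_zero, zero_mul, sub_zero]
      calc t + ((i + l) / ((n + 1 : ℕ) : ℤ)) • c
          = (t + l • c) + (((i + l) / ((n + 1 : ℕ) : ℤ)) • c + -(l • c)) := by abel
        _ ≤ _ := add_le_add_left ht _
    · refine le_trans (le_of_eq ?_) (hm (hTa i s (by omega)))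
      simp only [T]
      rw [map_add_zsmul_of_map_add hc, ← Function.iterate_succ_apply' h]
      congr 3; push_cast; ring
  · intro i
    obtain ⟨s, -, e⟩ := haT i
    exact ⟨s, _, e⟩

/-- A monotone sequence that advances by `c > 0` every `q` steps has an upper adjoint, the index of
the last term that is `≤ t`. -/
lemma exists_adjoint [Archimedean Λ] {u : ℤ → Λ} (hu : Monotone u) {q : ℤ} {c : Λ}
    (hc0 : 0 < c) (huc : ∀ i, u (i + q) = u i + c) :
    ∃ U : Λ → ℤ, (∀ i t, u i ≤ t ↔ i ≤ U t) ∧ Monotone U ∧ ∀ t, U (t + c) = U t + q := by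
  have key : ∀ t, ∃ n : ℤ, u n ≤ t ∧ ∀ i, u i ≤ t → i ≤ n := fun t => by
    apply Int.exists_greatest_of_bdd
    · obtain ⟨n, hn⟩ := Archimedean.arch (t - u 0 + c) hc0
      refine ⟨n * q, fun i hi => ?_⟩
      by_contra hlt
      have h1 := hu (not_le.1 hlt).le
      have h2 := seq_add_mul huc n 0
      rw [zero_add, natCast_zsmul] at h2
      rw [h2] at h1
      have h3 : t + c ≤ t := calc
        t + c = u 0 + (t - u 0 + c) := by abel
        _ ≤ u 0 + n • c := add_le_add_right hn _
        _ ≤ t := h1.trans hi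
      exact absurd hc0 (not_lt.2 (by simpa using h3))
    · obtain ⟨n, hn⟩ := Archimedean.arch (u 0 - t) hc0
      refine ⟨-n * q, ?_⟩
      have h2 := seq_add_mul huc (-n) 0
      rw [zero_add, neg_zsmul, natCast_zsmul] at h2
      rw [h2, ← sub_eq_add_neg]
      exact sub_le_comm.1 hn
  choose U hU1 hU2 using key
  have hg : ∀ i t, u i ≤ t ↔ i ≤ U t := fun i t => ⟨hU2 t i, fun h => (hu h).trans (hU1 t)⟩
  refine ⟨U, hg, fun s t hst => (hg _ _).1 ((hU1 s).trans hst), fun t => ?_⟩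
  refine eq_of_forall_le_iff fun i => ?_
  have := huc (i - q)
  rw [sub_add_cancel] at this
  rw [← hg, this, add_le_add_iff_right, hg, sub_le_iff_le_add]

end Order

/-! ### The combinatorial core -/

/-- A monotone surjection of `ℤ` cannot skip values, so if it also advances by `q` every `q` steps
then each of its increments is exactly `1`. -/
lemma eq_add_of_surjective {ψ : ℤ → ℤ} (hψ : Monotone ψ) (hs : Function.Surjective ψ) {q : ℕ}
    (hq : 0 < q) (hc : ∀ k, ψ (k + q) = ψ k + q) (k : ℤ) : ψ k = k + ψ 0 := by
  have h1 : ∀ k, ψ (k + 1) ≤ ψ k + 1 := fun k => by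
    by_contra hlt
    obtain ⟨i, hi⟩ := hs (ψ k + 1)
    rcases le_or_gt i k with h | h
    · have := hψ h; omega
    · have := hψ (show k + 1 ≤ i from h); omega
  have h2 : ∀ (n : ℕ) k, ψ (k + n) ≤ ψ k + n := fun n => by
    induction n with
    | zero => simp
    | succ n ih =>
      intro k
      have := h1 (k + n)
      have := ih k
      push_cast
      rw [← add_assoc]
      omega
  have h3 : ∀ k, ψ (k + 1) = ψ k + 1 := fun k => by
    have h4 := h2 (q - 1) (k + 1)
    have h5 : k + 1 + ((q - 1 : ℕ) : ℤ) = k + q := by omega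
    rw [h5, hc] at h4
    have := h1 k
    omega
  have h4 := seq_add_mul h3 k 0
  simp only [zero_add, mul_one, smul_eq_mul] at h4
  rw [h4, add_comm]

/-- A map of `ℤ` whose range misses a residue class mod `q` has an orbit that returns to the same
residue mod `q` after fewer than `q` steps. -/
lemma exists_short_period {h : ℤ → ℤ} {q : ℕ} (hq : 0 < q) {z : ℤ}
    (hz : ∀ k r : ℤ, h k ≠ z + r * q) :
    ∃ (m : ℕ) (l k : ℤ), 0 < m ∧ m < q ∧ h^[m] (h k) = h k + l * q := by
  have : NeZero q := ⟨hq.ne'⟩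
  let e : Fin q → ZMod q := fun s => ((h^[s + 1] 0 : ℤ) : ZMod q)
  have hns : ¬ Function.Surjective e := fun hs => by
    obtain ⟨s, hs⟩ := hs z
    simp only [e, Function.iterate_succ_apply'] at hs
    obtain ⟨r, hr⟩ := (ZMod.intCast_eq_intCast_iff_dvd_sub _ _ _).1 hs.symm
    exact hz _ r (by linarith)
  have hcard : Fintype.card (Fin q) = Fintype.card (ZMod q) := by
    rw [Fintype.card_fin, ZMod.card]
  have hni : ¬ Function.Injective e := fun hi =>
    hns ((Fintype.bijective_iff_injective_and_card e).2 ⟨hi, hcard⟩).2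
  have main : ∀ s s' : Fin q, e s = e s' → s < s' →
      ∃ (m : ℕ) (l k : ℤ), 0 < m ∧ m < q ∧ h^[m] (h k) = h k + l * q := fun s s' hss hlt => by
    obtain ⟨r, hr⟩ := (ZMod.intCast_eq_intCast_iff_dvd_sub _ _ _).1 hss
    have hlt' : (s : ℕ) < s' := hlt
    refine ⟨s' - s, r, h^[s] 0, by omega, by omega, ?_⟩
    rw [← Function.iterate_succ_apply' h, ← Function.iterate_add_apply,
      show (s' : ℕ) - s + (s + 1) = s' + 1 by omega]
    linarith
  simp only [Function.Injective, not_forall] at hni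
  obtain ⟨s, s', hss, hne⟩ := hni
  rcases lt_or_gt_of_ne hne with hlt | hlt
  · exact main s s' hss hlt
  · exact main s' s hss.symm hlt

/-- The combinatorial form of the upper bound. Think of two interleaved increasing families `a`, `b`
of points indexed by `ℤ`, with `a k ≤ b j` exactly when `k ≤ φ j`, and of maps `a j ↦ b j` and
`b j ↦ a (j + p)`. The slowest monotone extensions of these maps act on indices by `φ` and `ψ + p`;
the conclusion bounds `p / q` by `(p₁ + p₂ + 1) / N` with `p₁ / N` and `p₂ / N` not exceeding the
speeds of `ψ + p` and `φ`. -/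
lemma exists_fraction (q : ℕ) : ∀ (_ : 0 < q) (p : ℤ) (φ ψ : ℤ → ℤ) (_ : Monotone φ)
    (_ : ∀ j, φ (j + q) = φ j + q) (_ : ∀ j k, φ j < k ↔ j ≤ ψ k),
    ∃ (N : ℕ) (p₁ p₂ : ℤ), 0 < N ∧ N * p ≤ (p₁ + p₂ + 1) * q ∧
      (∃ k, k + p₂ * q ≤ φ^[N] k) ∧ ∃ k, k + p₁ * q ≤ (fun k => ψ k + p)^[N] k := by
  induction q using Nat.strong_induction_on with
  | _ q IH =>
  intro hq p φ ψ hφ hφq hgal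
  have hqz : (0 : ℤ) < q := by exact_mod_cast hq
  have hψ : Monotone ψ := fun k k' hk => (hgal _ _).1 (((hgal _ _).2 le_rfl).trans_le hk)
  have hψq : ∀ k, ψ (k + q) = ψ k + q := fun k => by
    refine eq_of_forall_le_iff fun i => ?_
    have := hφq (i - q)
    rw [sub_add_cancel] at this
    rw [← hgal, this, add_lt_add_iff_right, hgal, sub_le_iff_le_add]
  set f : ℤ → ℤ := fun k => ψ k + p with hf
  have hfm : Monotone f := fun k k' hk => add_le_add_left (hψ hk) p
  have hfq : ∀ k, f (k + q) = f k + q := fun k => by simp only [hf, hψq]; ring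
  by_cases hs : Function.Surjective f
  · have hψs : Function.Surjective ψ := fun z => by
      obtain ⟨k, hk⟩ := hs (z + p)
      exact ⟨k, by simpa [hf] using hk⟩
    have hsh := eq_add_of_surjective hψ hψs hq hψq
    have hφsh : ∀ j, φ j = j + (-ψ 0 - 1) := fun j => by
      refine eq_of_forall_lt_iff fun k => ?_
      have := hgal j k
      rw [hsh] at this
      have h' := hgal j (k + 1)
      rw [hsh] at h'
      omega
    have hfsh : ∀ k, f k = k + (ψ 0 + p) := fun k => by simp only [hf]; rw [hsh]; ring
    have iter : ∀ (w : ℤ → ℤ) (d : ℤ), (∀ k, w k = k + d) → ∀ n : ℕ, w^[n] 0 = d * n := by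
      intro w d hw n
      induction n with
      | zero => simp
      | succ n ih => rw [Function.iterate_succ_apply', ih, hw]; push_cast; ring
    refine ⟨q, ψ 0 + p, -ψ 0 - 1, hq, le_of_eq (by ring), ⟨0, ?_⟩, ⟨0, ?_⟩⟩
    · rw [iter φ _ hφsh, zero_add]
    · rw [iter f _ hfsh, zero_add]
  · simp only [Function.Surjective, not_forall, not_exists] at hs
    obtain ⟨z, hz⟩ := hs
    obtain ⟨U, hU, hUm, hUq⟩ := exists_adjoint hfm hqz hfq
    -- `f (U x + 1)` is the least element of the range of `f` exceeding `x`.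
    have hUgt : ∀ x, x < f (U x + 1) := fun x => by
      by_contra hle
      have := (hU _ _).1 (not_lt.1 hle)
      omega
    have hUmin : ∀ x i, x < f i → f (U x + 1) ≤ f i := fun x i hi => by
      refine hfm ?_
      by_contra hlt
      exact absurd ((hU i x).2 (by omega)) (not_le.2 hi)
    -- `f` is replaced by the larger map that rounds up to its range before applying `f`.
    let h : ℤ → ℤ := fun k => f (f (U (φ k) + 1))
    have hhm : Monotone h := fun k k' hk =>
      hfm (hfm (add_le_add_left (hUm (hφ hk)) 1))
    have hhq : ∀ k, h (k + q) = h k + q := fun k => by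
      simp only [h, hφq, hUq]
      rw [add_right_comm, hfq, hfq]
    have hhp : ∀ k, k + p ≤ h k := fun k =>
      add_le_add_left ((hgal _ _).1 (hUgt (φ k))) p
    have hfr : ∀ (r i : ℤ), f (i + r * q) = f i + r * q := fun r i => by
      simpa using seq_add_mul hfq r i
    obtain ⟨m, l, k₀, hm0, hmq, hper⟩ := exists_short_period (h := h) hq (z := z) (fun k r hk => by
      refine hz (f (U (φ k) + 1) + (-r) * q) ?_
      rw [hfr]
      change h k + _ = _
      rw [hk]; ring)
    have hmz : (0 : ℤ) < m := by exact_mod_cast hm0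
    have hlm : m * p ≤ l * q := by
      have : ∀ n : ℕ, h k₀ + n * p ≤ h^[n] (h k₀) := fun n => by
        induction n with
        | zero => simp
        | succ n ih =>
          rw [Function.iterate_succ_apply']
          have := hhp (h^[n] (h k₀))
          push_cast
          linarith
      have := this m
      rw [hper] at this
      linarith
    obtain ⟨a, ham, haq, hah, har⟩ := exists_labelling hhm hqz.le hhq hm0 (l := l) (t := h k₀)
      (by rw [hper, smul_eq_mul])
    have har' : ∀ i, ∃ j, a i = f j := fun i => by
      obtain ⟨s, r, e⟩ := har i
      rw [← Function.iterate_succ_apply, Function.iterate_succ_apply'] at e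
      exact ⟨_, by rw [e, smul_eq_mul]; exact (hfr r _).symm⟩
    obtain ⟨A, hA, hAm, hAq⟩ := exists_adjoint ham hqz haq
    have hφ'm : Monotone fun i => A (φ (a i)) := fun i j hij => hAm (hφ (ham hij))
    have hφ'q : ∀ i, A (φ (a (i + m))) = A (φ (a i)) + m := fun i => by rw [haq, hφq, hAq]
    obtain ⟨Ψ, hΨ, -, -⟩ := exists_adjoint hφ'm hmz hφ'q
    have hgal' : ∀ j k, A (φ (a j)) < k ↔ j ≤ Ψ (k - 1) := fun j k => by
      rw [← hΨ, Int.le_sub_one_iff]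
    obtain ⟨N, p₁, p₂, hN, hfrac, ⟨k₂, hk₂⟩, ⟨k₁, hk₁⟩⟩ :=
      IH m hmq hm0 l _ (fun k => Ψ (k - 1)) hφ'm hφ'q hgal'
    refine ⟨N, p₁, p₂, hN, ?_, ⟨a k₂, ?_⟩, ⟨a k₁, ?_⟩⟩
    · have hNz : (0 : ℤ) < N := by exact_mod_cast hN
      refine le_of_mul_le_mul_left ?_ hmz
      nlinarith [mul_le_mul_of_nonneg_left hlm hNz.le, mul_le_mul_of_nonneg_right hfrac hqz.le]
    · have := le_iterate_of_le_map hφ ham haq (fun k => (hA _ _).2 le_rfl) hk₂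
      simpa using this
    · have := le_iterate_of_le_map hfm ham haq (fun k => ?_) hk₁
      · simpa using this
      · -- `a k` lies in the range of `f` above `φ (a j)`, where `j` is the new `ψ` at `k`, so
        -- rounding `φ (a j)` up to that range does not pass `a k`.
        obtain ⟨i, hi⟩ := har' k
        refine (hah _).trans (hfm ?_)
        rw [hi]
        refine hUmin _ _ ?_
        rw [← hi]
        by_contra hle
        have h1 := (hA _ _).1 (not_lt.1 hle)
        have h2 := (hgal' _ k).2 le_rfl
        omega

/-! ### The upper bound -/

lemma exists_fraction_of_lt {f g : CircleDeg1Lift} {q : ℕ} (hq : 0 < q) {p : ℤ}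
    (hpq : (p : ℝ) < q * (f * g).translationNumber) :
    ∃ (N : ℕ) (p₁ p₂ : ℤ), 0 < N ∧ N * p ≤ (p₁ + p₂ + 1) * q ∧
      (p₁ : ℝ) ≤ N * f.translationNumber ∧ (p₂ : ℝ) ≤ N * g.translationNumber := by
  have hqz : (0 : ℤ) < q := by exact_mod_cast hq
  have ht : (0 : ℝ) + p • (1 : ℝ) ≤ (f * g)^[q] 0 := by
    rw [← CircleDeg1Lift.translationNumber_pow] at hpq
    have := CircleDeg1Lift.lt_map_of_int_lt_translationNumber _ hpq 0
    rw [CircleDeg1Lift.coe_pow] at this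
    simpa using this.le
  obtain ⟨a, ham, haq, hah, -⟩ := exists_labelling (f * g).monotone zero_le_one
    (f * g).map_add_one hq ht
  obtain ⟨A, hA, hAm, hAq⟩ := exists_adjoint ham one_pos haq
  have hφm : Monotone fun i => A (g (a i)) := fun i j hij => hAm (g.monotone (ham hij))
  have hφq : ∀ i, A (g (a (i + q))) = A (g (a i)) + q := fun i => by
    rw [haq, g.map_add_one, hAq]
  obtain ⟨Ψ, hΨ, -, -⟩ := exists_adjoint hφm hqz hφq
  have hgal : ∀ j k, A (g (a j)) < k ↔ j ≤ Ψ (k - 1) := fun j k => by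
    rw [← hΨ, Int.le_sub_one_iff]
  obtain ⟨N, p₁, p₂, hN, hfrac, ⟨k₂, hk₂⟩, ⟨k₁, hk₁⟩⟩ :=
    exists_fraction q hq p _ (fun k => Ψ (k - 1)) hφm hφq hgal
  refine ⟨N, p₁, p₂, hN, hfrac, ?_, ?_⟩
  · have := le_iterate_of_le_map f.monotone ham haq (fun k => ?_) hk₁
    · rw [← CircleDeg1Lift.translationNumber_pow]
      apply CircleDeg1Lift.le_translationNumber_of_add_int_le (x := a k₁)
      rw [CircleDeg1Lift.coe_pow]
      simpa using this
    · refine (hah _).trans (f.monotone ?_)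
      by_contra hle
      have h1 := (hA _ _).1 (not_le.1 hle).le
      have h2 := (hgal _ k).2 le_rfl
      exact absurd h1 (not_le.2 h2)
  · have := le_iterate_of_le_map g.monotone ham haq (fun k => (hA _ _).2 le_rfl) hk₂
    rw [← CircleDeg1Lift.translationNumber_pow]
    apply CircleDeg1Lift.le_translationNumber_of_add_int_le (x := a k₂)
    rw [CircleDeg1Lift.coe_pow]
    simpa using this

lemma bddAbove_F_set (x y : ℝ) : BddAbove {t : ℝ | ∃ q : ℕ, 0 < q ∧ ∃ p₁ p₂ : ℤ,
    (p₁ : ℝ) ≤ q * x ∧ (p₂ : ℝ) ≤ q * y ∧ t = ((p₁ : ℝ) + (p₂ : ℝ) + 1) / q} := by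
  refine ⟨x + y + 1, ?_⟩
  rintro t ⟨q, hq, p₁, p₂, h1, h2, rfl⟩
  have hq1 : (1 : ℝ) ≤ q := by exact_mod_cast hq
  rw [div_le_iff₀ (by linarith)]
  nlinarith

lemma tau_mul_le_F (f g : CircleDeg1Liftˣ) : tau (f * g) ≤ F (tau f) (tau g) := by
  refine le_of_forall_rat_lt_imp_le fun r hr => ?_
  have hd : (0 : ℝ) < r.den := by exact_mod_cast r.den_pos
  have hrd : (r : ℝ) = r.num / r.den := Rat.cast_def r
  rw [hrd, div_lt_iff₀ hd, mul_comm] at hr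
  obtain ⟨N, p₁, p₂, hN, hfrac, h1, h2⟩ :=
    exists_fraction_of_lt (f := f) (g := g) r.den_pos hr
  have hNr : (0 : ℝ) < N := by exact_mod_cast hN
  refine le_csSup_of_le (bddAbove_F_set _ _) ⟨N, hN, p₁, p₂, h1, h2, rfl⟩ ?_
  rw [hrd, div_le_div_iff₀ hd hNr, mul_comm]
  exact_mod_cast hfrac

/-! ### The lower bound -/

lemma moebius_comp {c d r : ℝ} (hc : 0 < c) (hd : 0 < d) (h0 : 0 ≤ r) (h1 : r < 1) :
    d * (c * r / (c * r + 1 - r)) / (d * (c * r / (c * r + 1 - r)) + 1 - c * r / (c * r + 1 - r)) =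
      d * c * r / (d * c * r + 1 - r) := by
  have : 0 < c * r + 1 - r := by nlinarith [mul_nonneg hc.le h0]
  have h2 : 0 < d * c * r + 1 - r := by nlinarith [mul_nonneg (mul_pos hd hc).le h0]
  have h3 : d * (c * r / (c * r + 1 - r)) + 1 - c * r / (c * r + 1 - r) =
    (d * c * r + 1 - r) / (c * r + 1 - r) := by field_simp; ring
  rw [h3]
  field_simp

/-- The degree one lift equal to the Möbius map `r ↦ c r / (c r + 1 - r)` on `[0, 1)`. These maps
compose multiplicatively in `c`. -/
noncomputable def moebiusLift (c : ℝ) (hc : 0 < c) : CircleDeg1Lift where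
  toFun t := ⌊t⌋ + c * Int.fract t / (c * Int.fract t + 1 - Int.fract t)
  monotone' := by
    have hb : ∀ r : ℝ, 0 ≤ r → r < 1 → 0 < c * r + 1 - r := fun r h0 h1 => by
      nlinarith [mul_nonneg hc.le h0]
    intro s t hst
    have hs0 := Int.fract_nonneg s
    have hs1 := Int.fract_lt_one s
    have ht0 := Int.fract_nonneg t
    have ht1 := Int.fract_lt_one t
    have hbs := hb _ hs0 hs1
    have hbt := hb _ ht0 ht1
    rcases (Int.floor_mono hst).eq_or_lt with h | h
    · have hle : Int.fract s ≤ Int.fract t := by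
        rw [Int.fract, Int.fract, h]; linarith
      simp only [h]
      refine add_le_add_right ?_ _
      rw [div_le_div_iff₀ hbs hbt]
      nlinarith [mul_le_mul_of_nonneg_left hle hc.le]
    · have h' : (⌊s⌋ : ℝ) + 1 ≤ ⌊t⌋ := by exact_mod_cast h
      have h1 : c * Int.fract s / (c * Int.fract s + 1 - Int.fract s) ≤ 1 := by
        rw [div_le_one hbs]; linarith
      have h2 : 0 ≤ c * Int.fract t / (c * Int.fract t + 1 - Int.fract t) :=
        div_nonneg (mul_nonneg hc.le ht0) hbt.le
      simp only
      linarith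
  map_add_one' t := by
    simp only [Int.floor_add_one, Int.fract_add_one]
    push_cast
    ring

lemma moebiusLift_apply {c : ℝ} (hc : 0 < c) {r : ℝ} (h0 : 0 ≤ r) (h1 : r < 1) :
    moebiusLift c hc r = c * r / (c * r + 1 - r) := by
  change (⌊r⌋ : ℝ) + c * Int.fract r / (c * Int.fract r + 1 - Int.fract r) = _
  rw [Int.fract_eq_self.2 ⟨h0, h1⟩, Int.floor_eq_zero_iff.2 ⟨h0, h1⟩]
  simp

lemma moebiusLift_mul_inv {c d : ℝ} (hc : 0 < c) (hd : 0 < d) (hcd : d * c = 1) :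
    moebiusLift d hd * moebiusLift c hc = 1 := by
  ext t
  have h0 := Int.fract_nonneg t
  have h1 := Int.fract_lt_one t
  have hb : 0 < c * Int.fract t + 1 - Int.fract t := by nlinarith [mul_nonneg hc.le h0]
  have ht : t = Int.fract t + ⌊t⌋ := (Int.fract_add_floor t).symm
  rw [CircleDeg1Lift.mul_apply, CircleDeg1Lift.coe_one, id, ht, CircleDeg1Lift.map_add_int,
    CircleDeg1Lift.map_add_int, moebiusLift_apply hc h0 h1, moebiusLift_apply hd,
    moebius_comp hc hd h0 h1, hcd]
  · simp
  · exact div_nonneg (mul_nonneg hc.le h0) hb.le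
  · rw [div_lt_one hb]; linarith

/-- `moebiusLift c` as an invertible element, with inverse `moebiusLift c⁻¹`. -/
noncomputable def moebiusUnit (c : ℝ) (hc : 0 < c) : CircleDeg1Liftˣ where
  val := moebiusLift c hc
  inv := moebiusLift c⁻¹ (inv_pos.2 hc)
  val_inv := moebiusLift_mul_inv _ _ (mul_inv_cancel₀ hc.ne')
  inv_val := moebiusLift_mul_inv _ _ (inv_mul_cancel₀ hc.ne')

/-- For `θ ∈ [0, 1)` there is a homeomorphism of translation number `θ` moving some point by at
least `1/2`: for `θ > 0` a conjugate of the rotation by `θ`, for `θ = 0` a map fixing `0` and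
sending `1/4` to `3/4`. -/
lemma exists_unit_half {θ : ℝ} (h0 : 0 ≤ θ) (h1 : θ < 1) :
    ∃ (f : CircleDeg1Liftˣ) (s : ℝ), tau f = θ ∧ s + 1 / 2 ≤ f s := by
  rcases h0.eq_or_lt with rfl | h0
  · refine ⟨moebiusUnit 9 (by norm_num), 1 / 4, ?_, ?_⟩
    · have : moebiusLift 9 (by norm_num) 0 = 0 + ((0 : ℤ) : ℝ) := by
        rw [moebiusLift_apply _ le_rfl one_pos]; simp
      have h2 := CircleDeg1Lift.translationNumber_of_eq_add_int _ this
      rw [Int.cast_zero] at h2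
      exact h2
    · change _ ≤ moebiusLift 9 (by norm_num) (1 / 4)
      rw [moebiusLift_apply _ (by norm_num) (by norm_num)]
      norm_num
  · have hc : 0 < (1 - θ) / θ := div_pos (by linarith) h0
    let u := moebiusUnit _ hc
    refine ⟨u * CircleDeg1Lift.translate (Multiplicative.ofAdd θ) * u⁻¹, 0, ?_, ?_⟩
    · rw [tau, Units.val_mul, Units.val_mul, CircleDeg1Lift.translationNumber_conj_eq,
        CircleDeg1Lift.translationNumber_translate]
    · have hu0 : u 0 = 0 := by
        change moebiusLift _ hc 0 = 0
        rw [moebiusLift_apply _ le_rfl one_pos]; simp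
      have hu0' : (u⁻¹ : CircleDeg1Liftˣ) 0 = 0 := by
        conv_lhs => rw [← hu0]
        exact CircleDeg1Lift.units_inv_apply_apply u 0
      have huθ : u θ = 1 / 2 := by
        change moebiusLift _ hc θ = _
        rw [moebiusLift_apply _ h0.le h1]
        have h2 : (1 - θ) / θ * θ = 1 - θ := div_mul_cancel₀ _ h0.ne'
        rw [h2, div_eq_div_iff (by linarith) two_ne_zero]
        ring
      rw [Units.val_mul, Units.val_mul, CircleDeg1Lift.mul_apply, CircleDeg1Lift.mul_apply, hu0',
        CircleDeg1Lift.translate_apply, add_zero, huθ, zero_add]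

lemma exists_unit_displacement {X : ℝ} {p : ℤ} (hp : (p : ℝ) ≤ X) (s : ℝ) :
    ∃ f : CircleDeg1Liftˣ, tau f = X ∧ s + 1 / 2 + p ≤ f s := by
  obtain ⟨f, s₀, hf, hs⟩ := exists_unit_half (Int.fract_nonneg X) (Int.fract_lt_one X)
  let T : ℝ → CircleDeg1Liftˣ := fun v => CircleDeg1Lift.translate (Multiplicative.ofAdd v)
  have hT : ∀ v t, T v t = v + t := fun v t => CircleDeg1Lift.translate_apply v t
  have hTi : ∀ v t, ((T v)⁻¹ : CircleDeg1Liftˣ) t = -v + t := fun v t =>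
    CircleDeg1Lift.translate_inv_apply v t
  refine ⟨T ⌊X⌋ * (T (s - s₀) * f * (T (s - s₀))⁻¹), ?_, ?_⟩
  · rw [tau, Units.val_mul, CircleDeg1Lift.translationNumber_mul_of_commute, Units.val_mul,
      Units.val_mul, CircleDeg1Lift.translationNumber_conj_eq,
      CircleDeg1Lift.translationNumber_translate]
    · change _ + tau f = _
      rw [hf, Int.floor_add_fract]
    · rw [CircleDeg1Lift.commute_iff_commute]
      intro t
      rw [hT, hT, CircleDeg1Lift.map_int_add]
  · have hpX : (p : ℝ) ≤ ⌊X⌋ := by exact_mod_cast Int.le_floor.2 hp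
    simp only [Units.val_mul, CircleDeg1Lift.mul_apply, hT, hTi]
    rw [show -(s - s₀) + s = s₀ by ring]
    linarith

/-- Conjugation by the dilation `t ↦ q t`. On the circle it lifts a map to a `q`-fold covering. -/
noncomputable def rescale (q : ℕ) (hq : 0 < q) : CircleDeg1Lift →* CircleDeg1Lift where
  toFun f :=
    { toFun := fun t => f (q * t) / q
      monotone' := fun s t hst => by
        have : (0 : ℝ) < q := by exact_mod_cast hq
        have : f (q * s) ≤ f (q * t) := f.monotone (by gcongr)
        simp only
        gcongr
      map_add_one' := fun t => by
        have : (0 : ℝ) < q := by exact_mod_cast hq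
        rw [mul_add, mul_one, f.map_add_nat]
        field_simp }
  map_one' := by
    have : (0 : ℝ) < q := by exact_mod_cast hq
    ext t
    simp only [CircleDeg1Lift.coe_one, id]
    change (q : ℝ) * t / q = t
    field_simp
  map_mul' f g := by
    have : (0 : ℝ) < q := by exact_mod_cast hq
    ext t
    change f (g (q * t)) / q = f (q * (g (q * t) / q)) / q
    rw [mul_div_cancel₀ _ this.ne']

lemma translationNumber_rescale {q : ℕ} (hq : 0 < q) (f : CircleDeg1Lift) :
    (rescale q hq f).translationNumber = f.translationNumber / q := by
  apply CircleDeg1Lift.translationNumber_eq_of_tendsto₀'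
  have := (f.tendsto_translation_number₀').div_const (q : ℝ)
  refine this.congr fun n => ?_
  rw [← CircleDeg1Lift.coe_pow, ← map_pow]
  change _ = (f ^ (n + 1)) (q * 0) / q / _
  rw [mul_zero, div_right_comm]

lemma exists_le_tau_mul {x y : ℝ} {q : ℕ} (hq : 0 < q) {p₁ p₂ : ℤ} (h1 : (p₁ : ℝ) ≤ q * x)
    (h2 : (p₂ : ℝ) ≤ q * y) :
    ∃ f g : CircleDeg1Liftˣ, tau f = x ∧ tau g = y ∧
      ((p₁ : ℝ) + (p₂ : ℝ) + 1) / q ≤ tau (f * g) := by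
  have hqr : (0 : ℝ) < q := by exact_mod_cast hq
  obtain ⟨A, hA, hA'⟩ := exists_unit_displacement h1 (1 / 4)
  obtain ⟨B, hB, hB'⟩ := exists_unit_displacement h2 (3 / 4)
  have hτ : ∀ C : CircleDeg1Liftˣ, tau (Units.map (rescale q hq) C) = tau C / q := fun C =>
    translationNumber_rescale hq _
  refine ⟨Units.map (rescale q hq) A, Units.map (rescale q hq) B, ?_, ?_, ?_⟩
  · rw [hτ, hA, mul_div_cancel_left₀ _ hqr.ne']
  · rw [hτ, hB, mul_div_cancel_left₀ _ hqr.ne']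
  · rw [← map_mul, hτ]
    gcongr
    have key : (3 / 4 : ℝ) + ((p₁ + p₂ + 1 : ℤ) : ℝ) ≤ (A * B : CircleDeg1Lift) (3 / 4) := by
      rw [CircleDeg1Lift.mul_apply]
      have h3 := (A : CircleDeg1Lift).monotone hB'
      have h4 := (A : CircleDeg1Lift).map_add_int (1 / 4) (1 + p₂)
      rw [show (1 / 4 : ℝ) + ((1 + p₂ : ℤ) : ℝ) = 3 / 4 + 1 / 2 + p₂ by push_cast; ring] at h4
      rw [h4] at h3
      push_cast at h3 ⊢
      linarith
    have := CircleDeg1Lift.le_translationNumber_of_add_int_le _ key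
    push_cast at this
    exact this

theorem ab_theorem (x y : ℝ) : Rab x y = F x y := by
  have hub : ∀ t ∈ {t : ℝ | ∃ f g : CircleDeg1Liftˣ, tau f = x ∧ tau g = y ∧ tau (f * g) = t},
      t ≤ F x y := by
    rintro t ⟨f, g, rfl, rfl, rfl⟩
    exact tau_mul_le_F f g
  apply le_antisymm
  · refine csSup_le ?_ hub
    obtain ⟨f, g, hf, hg, -⟩ := exists_le_tau_mul (x := x) (y := y) one_pos
      (Int.floor_le _) (Int.floor_le _)
    exact ⟨_, f, g, hf, hg, rfl⟩
  · refine csSup_le ⟨_, 1, one_pos, _, _, Int.floor_le _, Int.floor_le _, rfl⟩ ?_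
    rintro t ⟨q, hq, p₁, p₂, h1, h2, rfl⟩
    obtain ⟨f, g, hf, hg, hle⟩ := exists_le_tau_mul hq h1 h2
    exact le_csSup_of_le ⟨_, hub⟩ ⟨f, g, hf, hg, rfl⟩ hle
end

section
/- For every word w in the free group on two generators and all x, y ∈ ℝ, the set S_w(x,y) = { τ(w(a,b)) : a, b lifts of orientation-preserving circle homeomorphisms with τ(a) = x, τ(b) = y }, where w(a,b) denotes the image of w under the group homomorphism from the free group to the group of such lifts sending the generators to a and b, is a nonempty closed interval: there exist real numbers r ≤ R with S_w(x,y) = [r, R]. -/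
open Filter Topology Set

namespace RotationInterval

/-- The group of lifts of orientation-preserving circle homeomorphisms. -/
abbrev G := CircleDeg1Liftˣ

/-! ### The topological group of lifts -/

/-- The topology of pointwise convergence on the group of lifts. -/
instance topologyG : TopologicalSpace G :=
  TopologicalSpace.induced (fun u : G => (u : ℝ → ℝ)) inferInstance

lemma isInducing_coe : IsInducing (fun u : G => (u : ℝ → ℝ)) := ⟨rfl⟩

lemma continuous_iff {T : Type*} [TopologicalSpace T] {F : T → G} :
    Continuous F ↔ ∀ z : ℝ, Continuous (fun t => F t z) := by
  rw [isInducing_coe.continuous_iff, continuous_pi_iff]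
  rfl

lemma continuous_eval (z : ℝ) : Continuous (fun u : G => u z) :=
  continuous_iff.1 continuous_id z

lemma strictMono_coe (u : G) : StrictMono u := (CircleDeg1Lift.toOrderIso u).strictMono

lemma continuous_coe (u : G) : Continuous u := (CircleDeg1Lift.toOrderIso u).continuous

lemma inv_lt_iff (u : G) (z c : ℝ) : (u⁻¹ : G) z < c ↔ z < u c := by
  rw [← (strictMono_coe u).lt_iff_lt, CircleDeg1Lift.units_apply_inv_apply]

lemma lt_inv_iff (u : G) (z c : ℝ) : c < (u⁻¹ : G) z ↔ u c < z := by
  rw [← (strictMono_coe u).lt_iff_lt, CircleDeg1Lift.units_apply_inv_apply]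

lemma mul_coe (u v : G) (z : ℝ) : (u * v : G) z = u (v z) := rfl

lemma continuous_real_of_lt {T : Type*} [TopologicalSpace T] {f : T → ℝ}
    (h1 : ∀ c, IsOpen {t | f t < c}) (h2 : ∀ c, IsOpen {t | c < f t}) : Continuous f := by
  rw [OrderTopology.continuous_iff]
  exact fun c => ⟨h2 c, h1 c⟩

lemma continuous_inv_eval (z : ℝ) : Continuous (fun u : G => (u⁻¹ : G) z) := by
  refine continuous_real_of_lt (fun c => ?_) (fun c => ?_)
  · simp only [inv_lt_iff]
    exact isOpen_lt continuous_const (continuous_eval c)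
  · simp only [lt_inv_iff]
    exact isOpen_lt (continuous_eval c) continuous_const

instance : ContinuousInv G := ⟨continuous_iff.2 continuous_inv_eval⟩

instance : ContinuousMul G := by
  refine ⟨continuous_iff.2 fun z => ?_⟩
  -- `u (v z) < c` is rewritten as `v z < u⁻¹ c`, whose two sides are continuous in `(u, v)`
  refine continuous_real_of_lt (fun c => ?_) (fun c => ?_)
  · have e : ∀ p : G × G, (p.1 * p.2 : G) z < c ↔ p.2 z < (p.1⁻¹ : G) c :=
      fun p => by rw [mul_coe, lt_inv_iff]
    simp only [e]
    exact isOpen_lt ((continuous_eval z).comp continuous_snd)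
      ((continuous_inv_eval c).comp continuous_fst)
  · have e : ∀ p : G × G, c < (p.1 * p.2 : G) z ↔ (p.1⁻¹ : G) c < p.2 z :=
      fun p => by rw [mul_coe, inv_lt_iff]
    simp only [e]
    exact isOpen_lt ((continuous_inv_eval c).comp continuous_fst)
      ((continuous_eval z).comp continuous_snd)

lemma exists_unit (φ : ℝ → ℝ) (hm : StrictMono φ) (hc : Continuous φ)
    (h1 : ∀ z, φ (z + 1) = φ z + 1) : ∃ u : G, (u : ℝ → ℝ) = φ := by
  let f : CircleDeg1Lift := ⟨⟨φ, hm.monotone⟩, h1⟩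
  have hf : IsUnit f := CircleDeg1Lift.isUnit_iff_bijective.2
    ⟨hm.injective, f.continuous_iff_surjective.1 hc⟩
  obtain ⟨u, hu⟩ := hf
  exact ⟨u, by rw [hu]; rfl⟩

lemma continuous_tau : Continuous tau := by
  have hunif : TendstoUniformly (fun (n : ℕ) (u : G) => (u ^ n : G) 0 / n) tau atTop := by
    rw [Metric.tendstoUniformly_iff]
    intro ε hε
    obtain ⟨N, hN⟩ := exists_nat_gt (1 / ε)
    filter_upwards [eventually_ge_atTop (N + 1)] with n hn u
    have hn' : (N : ℝ) + 1 ≤ n := by exact_mod_cast hn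
    have hpos : (0 : ℝ) < 1 / ε := by positivity
    have hn0 : (0 : ℝ) < n := by linarith
    have h := CircleDeg1Lift.dist_pow_map_zero_mul_translationNumber_le (u : CircleDeg1Lift) n
    have h2 : dist (tau u) ((u ^ n : G) 0 / n) ≤ 1 / n := by
      rw [dist_comm, Real.dist_eq] at *
      rw [le_div_iff₀ hn0, ← abs_of_pos hn0, ← abs_mul, abs_of_pos hn0, sub_mul,
        div_mul_cancel₀ _ hn0.ne', abs_sub_comm, mul_comm]
      exact h
    refine h2.trans_lt ?_
    rw [div_lt_iff₀ hn0]
    rw [div_lt_iff₀ hε] at hN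
    nlinarith
  refine hunif.continuous (Frequently.of_forall fun n => ?_)
  exact ((continuous_eval 0).comp (continuous_pow n)).div_const _

lemma continuous_word (w : FreeGroup (Fin 2)) :
    Continuous (fun p : G × G => FreeGroup.lift ![p.1, p.2] w) := by
  induction w using FreeGroup.induction_on with
  | C1 => simpa using continuous_const
  | of i =>
    fin_cases i
    · simpa using continuous_fst
    · simpa using continuous_snd
  | inv_of i ih => simp only [map_inv]; exact ih.inv
  | mul v w hv hw => simp only [map_mul]; exact hv.mul hw

lemma tau_conj (h u : G) : tau (h * u * h⁻¹) = tau u := by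
  simp [tau]

lemma lift_conj (h a b : G) (w : FreeGroup (Fin 2)) :
    FreeGroup.lift ![h * a * h⁻¹, h * b * h⁻¹] w = h * FreeGroup.lift ![a, b] w * h⁻¹ := by
  have : FreeGroup.lift ![h * a * h⁻¹, h * b * h⁻¹]
      = (MulAut.conj h).toMonoidHom.comp (FreeGroup.lift ![a, b]) := by
    ext i
    fin_cases i <;> simp
  rw [this]
  simp

/-! ### Connectedness of the fibers of the translation number -/

/-- Every lift is joined to the identity by the segment of convex combinations. -/
lemma isPreconnected_univ_G : IsPreconnected (univ : Set G) := by
  refine isPreconnected_of_forall 1 fun u _ => ?_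
  have key : ∀ t : Icc (0 : ℝ) 1, ∃ v : G, (v : ℝ → ℝ) = fun z => (1 - t) * z + t * u z := by
    rintro ⟨t, h0, h1⟩
    refine exists_unit _ ?_ ?_ ?_
    · intro z z' hz
      have := strictMono_coe u hz
      rcases h0.eq_or_lt with rfl | h0
      · simpa using hz
      · have h3 := mul_lt_mul_of_pos_left this h0
        have h4 := mul_le_mul_of_nonneg_left hz.le (sub_nonneg.2 h1)
        simp only
        linarith
    · have := continuous_coe u
      fun_prop
    · intro z
      simp only [CircleDeg1Lift.map_add_one]
      ring
  choose F hF using key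
  have hFc : Continuous F := by
    refine continuous_iff.2 fun z => ?_
    simp only [hF]
    fun_prop
  refine ⟨range F, subset_univ _, ⟨⟨0, by simp⟩, ?_⟩, ⟨⟨1, by simp⟩, ?_⟩,
    isPreconnected_range hFc⟩
  · refine Units.ext (CircleDeg1Lift.ext fun z => ?_)
    simp [hF]
  · refine Units.ext (CircleDeg1Lift.ext fun z => ?_)
    simp [hF]

/-- The translation by `x`. -/
noncomputable def trans (x : ℝ) : G := CircleDeg1Lift.translate (Multiplicative.ofAdd x)

lemma tau_trans (x : ℝ) : tau (trans x) = x := CircleDeg1Lift.translationNumber_translate x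

lemma abs_map_sub_le (f : CircleDeg1Lift) (z : ℝ) : |f z - f 0 - z| ≤ 1 := by
  have h1 := f.map_le_of_map_zero z
  have h2 := f.le_map_of_map_zero z
  have h3 := Int.ceil_lt_add_one z
  have h4 := Int.sub_one_lt_floor z
  rw [abs_le]
  constructor <;> linarith

lemma abs_map_sub_tau_le (u : G) (z : ℝ) : |u z - z - tau u| ≤ 2 := by
  have h1 := abs_le.1 (abs_map_sub_le (u : CircleDeg1Lift) z)
  have h2 := (u : CircleDeg1Lift).dist_map_zero_translationNumber_le
  rw [Real.dist_eq] at h2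
  have h2 := abs_le.1 h2
  change -1 ≤ _ - tau u ∧ _ - tau u ≤ 1 at h2
  rw [abs_le]
  constructor <;> linarith [h1.1, h1.2, h2.1, h2.2]

lemma tau_pow (u : G) (n : ℕ) : tau (u ^ n) = n * tau u := by
  simp [tau]

/-- Conjugating `u` by the average of its first `n + 1` powers brings it uniformly close to a
translation. -/
lemma exists_conj_near (u : G) (n : ℕ) :
    ∃ h : G, ∀ z, |(h * u * h⁻¹ : G) z - (tau u + z)| ≤ 2 / (n + 1 : ℕ) := by
  have hn : (0 : ℝ) < (n + 1 : ℕ) := by positivity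
  have hex : ∃ h : G, (h : ℝ → ℝ) =
      fun z => (∑ k ∈ Finset.range (n + 1), (u ^ k : G) z) / (n + 1 : ℕ) := by
    refine exists_unit _ ?_ ?_ ?_
    · intro z z' hz
      simp only
      gcongr with k _
      · simp
      · exact strictMono_coe _ hz
    · have := fun k : ℕ => continuous_coe (u ^ k)
      fun_prop
    · intro z
      simp only [CircleDeg1Lift.map_add_one, Finset.sum_add_distrib, Finset.sum_const,
        Finset.card_range, nsmul_eq_mul, mul_one]
      field_simp
  obtain ⟨h, hh⟩ := hex
  refine ⟨h, fun z => ?_⟩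
  obtain ⟨p, rfl⟩ : ∃ p, h p = z := ⟨(h⁻¹ : G) z, by simp⟩
  have e1 : (h * u * h⁻¹ : G) (h p) = h (u p) := by
    rw [mul_coe, mul_coe, CircleDeg1Lift.units_inv_apply_apply]
  have e2 : h (u p) - h p = ((u ^ (n + 1) : G) p - p) / (n + 1 : ℕ) := by
    have e3 : ∀ k : ℕ, (u ^ k : G) (u p) = (u ^ (k + 1) : G) p := fun k => by
      rw [pow_succ, mul_coe]
    simp only [hh, e3]
    rw [← sub_div, ← Finset.sum_sub_distrib, Finset.sum_range_sub (fun k => (u ^ k : G) p)]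
    simp
  have e4 := abs_map_sub_tau_le (u ^ (n + 1)) p
  rw [tau_pow] at e4
  have e5 : (h * u * h⁻¹ : G) (h p) - (tau u + h p)
      = ((u ^ (n + 1) : G) p - p - (n + 1 : ℕ) * tau u) / (n + 1 : ℕ) := by
    rw [e1, sub_div, mul_div_cancel_left₀ _ hn.ne', ← e2]
    ring
  rw [e5, abs_div, abs_of_pos hn]
  gcongr

lemma isPreconnected_tau_fiber (x : ℝ) : IsPreconnected {u : G | tau u = x} := by
  refine isPreconnected_of_forall (trans x) fun u hu => ?_
  have hu : tau u = x := hu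
  have hc : IsPreconnected (range fun h : G => h * u * h⁻¹) := by
    rw [← image_univ]
    refine isPreconnected_univ_G.image _ (Continuous.continuousOn ?_)
    exact (continuous_id.mul continuous_const).mul continuous_inv
  refine ⟨insert (trans x) (range fun h : G => h * u * h⁻¹), ?_, mem_insert _ _,
    mem_insert_of_mem _ ⟨1, by simp⟩,
    hc.subset_closure (subset_insert _ _) (insert_subset ?_ subset_closure)⟩
  · rintro v (rfl | ⟨h, rfl⟩)
    · exact tau_trans x
    · exact (tau_conj h u).trans hu
  · choose h hh using exists_conj_near u
    refine mem_closure_of_tendsto (f := fun n => h n * u * (h n)⁻¹) (b := atTop) ?_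
      (Eventually.of_forall fun n => ⟨h n, rfl⟩)
    rw [isInducing_coe.tendsto_nhds_iff, tendsto_pi_nhds]
    intro z
    have e : (trans x) z = tau u + z := by rw [hu]; rfl
    rw [e, tendsto_iff_dist_tendsto_zero]
    refine squeeze_zero (fun _ => dist_nonneg) (fun n => hh n z) ?_
    exact (tendsto_const_div_atTop_nhds_zero_nat 2).comp (tendsto_add_atTop_nat 1)

/-! ### Compactness -/

/-- `φ` is increasing, and both `φ` and its inverse are `8`-Lipschitz. -/
def Bilip (φ : ℝ → ℝ) : Prop :=
  ∀ z z', z ≤ z' → (z' - z) / 8 ≤ φ z' - φ z ∧ φ z' - φ z ≤ 8 * (z' - z)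

lemma isCompact_bilip (x : ℝ) : IsCompact {u : G | Bilip u ∧ |u 0 - x| ≤ 1} := by
  rw [isInducing_coe.isCompact_iff]
  have himg : (fun u : G => (u : ℝ → ℝ)) '' {u : G | Bilip u ∧ |u 0 - x| ≤ 1}
      = {φ : ℝ → ℝ | (∀ z, φ (z + 1) = φ z + 1) ∧ Bilip φ ∧ |φ 0 - x| ≤ 1} := by
    ext φ
    constructor
    · rintro ⟨u, ⟨h1, h2⟩, rfl⟩
      exact ⟨fun z => CircleDeg1Lift.map_add_one _ z, h1, h2⟩
    · rintro ⟨h0, h1, h2⟩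
      have hm : StrictMono φ := fun z z' hz => by
        have := (h1 z z' hz.le).1
        linarith
      have hl : LipschitzWith 8 φ := by
        refine LipschitzWith.of_le_add_mul _ fun z z' => ?_
        rw [Real.dist_eq]
        rcases le_total z z' with hz | hz
        · have := hm.monotone hz
          have := abs_nonneg (z - z')
          push_cast
          linarith
        · have := (h1 z' z hz).2
          rw [abs_of_nonneg (by linarith)]
          push_cast
          linarith
      obtain ⟨u, hu⟩ := exists_unit φ hm hl.continuous h0
      refine ⟨u, ?_, hu⟩
      rw [mem_ofPred_eq, hu]
      exact ⟨h1, h2⟩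
  rw [himg]
  refine (isCompact_univ_pi (s := fun z : ℝ => Icc (x - 1 - 8 * |z|) (x + 1 + 8 * |z|))
    fun z => isCompact_Icc).of_isClosed_subset ?_ ?_
  · simp only [Bilip, ofPred_and, ofPred_forall]
    refine IsClosed.inter ?_ (IsClosed.inter ?_ ?_)
    · exact isClosed_iInter fun z => isClosed_eq (by fun_prop) (by fun_prop)
    · exact isClosed_iInter fun z => isClosed_iInter fun z' => isClosed_iInter fun _ =>
        (isClosed_le (by fun_prop) (by fun_prop)).inter (isClosed_le (by fun_prop) (by fun_prop))
    · exact isClosed_le (by fun_prop) (by fun_prop)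
  · rintro φ ⟨-, h1, h2⟩ z -
    have h2 := abs_le.1 h2
    change φ z ∈ Icc (x - 1 - 8 * |z|) (x + 1 + 8 * |z|)
    rcases le_total 0 z with hz | hz
    · have h3 := h1 0 z hz
      rw [abs_of_nonneg hz]
      constructor <;> linarith [h3.1, h3.2, h2.1, h2.2]
    · have h3 := h1 z 0 hz
      rw [abs_of_nonpos hz]
      constructor <;> linarith [h3.1, h3.2, h2.1, h2.2]

lemma isCompact_bilip_fiber (x : ℝ) : IsCompact {u : G | Bilip u ∧ tau u = x} := by
  have h := (isCompact_bilip x).inter_right (isClosed_singleton (x := x) |>.preimage continuous_tau)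
  convert h using 1
  ext u
  constructor
  · rintro ⟨h1, rfl⟩
    exact ⟨⟨h1, (u : CircleDeg1Lift).dist_map_zero_translationNumber_le⟩, rfl⟩
  · rintro ⟨⟨h1, -⟩, h2⟩
    exact ⟨h1, h2⟩

/-! ### Conjugation to a bilipschitz pair -/

/-- The averages `Φₙ = 4⁻ⁿ ∑ s₁ ∘ ⋯ ∘ sₙ`, the sum being over all words of length `n` in the letters
`a, a⁻¹, b, b⁻¹`. -/
noncomputable def Phi (a b : G) : ℕ → ℝ → ℝ
  | 0, z => z
  | n + 1, z => (Phi a b n (a z) + Phi a b n ((a⁻¹ : G) z) + Phi a b n (b z)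
      + Phi a b n ((b⁻¹ : G) z)) / 4

lemma Phi_monotone (a b : G) (n : ℕ) : Monotone (Phi a b n) := by
  induction n with
  | zero => exact monotone_id
  | succ n ih =>
    intro z z' hz
    have h : ∀ s : G, Phi a b n (s z) ≤ Phi a b n (s z') :=
      fun s => ih ((strictMono_coe s).monotone hz)
    simp only [Phi]
    linarith [h a, h a⁻¹, h b, h b⁻¹]

lemma Phi_add_one (a b : G) (n : ℕ) (z : ℝ) : Phi a b n (z + 1) = Phi a b n z + 1 := by
  induction n generalizing z with
  | zero => rfl
  | succ n ih =>
    simp only [Phi, CircleDeg1Lift.map_add_one, ih]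
    ring

lemma Phi_continuous (a b : G) (n : ℕ) : Continuous (Phi a b n) := by
  induction n with
  | zero => exact continuous_id
  | succ n ih =>
    have h : ∀ s : G, Continuous fun z => Phi a b n (s z) := fun s => ih.comp (continuous_coe s)
    exact ((((h a).add (h a⁻¹)).add (h b)).add (h b⁻¹)).div_const 4

lemma abs_Phi_sub_le (a b : G) (n : ℕ) (z : ℝ) : |Phi a b n z - Phi a b n 0 - z| ≤ 1 :=
  abs_map_sub_le ⟨⟨Phi a b n, Phi_monotone a b n⟩, Phi_add_one a b n⟩ z

lemma hasSum_weights : HasSum (fun n : ℕ => (1 / 2 : ℝ) ^ (n + 1)) 1 := by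
  have := hasSum_geometric_two.mul_left (1 / 2 : ℝ)
  norm_num at this
  simpa [pow_succ, mul_comm] using this

/-- The increments of the conjugating map `h` are the weighted sums of the increments of the `Φₙ`. -/
lemma exists_average (a b : G) : ∃ h : G, ∀ z z',
    HasSum (fun n => (1 / 2 : ℝ) ^ (n + 1) * (Phi a b n z' - Phi a b n z)) (h z' - h z) := by
  -- subtracting `Φₙ(0) + z` makes the terms bounded, so that the series converges uniformly
  let c : ℕ → ℝ → ℝ := fun n z => (1 / 2 : ℝ) ^ (n + 1) * (Phi a b n z - Phi a b n 0 - z)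
  have hb : ∀ n z, ‖c n z‖ ≤ (1 / 2 : ℝ) ^ (n + 1) := fun n z => by
    rw [Real.norm_eq_abs, abs_mul, abs_of_pos (by positivity)]
    exact mul_le_of_le_one_right (by positivity) (abs_Phi_sub_le a b n z)
  have hs : ∀ z, Summable fun n => c n z := fun z =>
    Summable.of_norm_bounded hasSum_weights.summable (hb · z)
  let H : ℝ → ℝ := fun z => z + ∑' n, c n z
  have hH : ∀ z z', HasSum (fun n => (1 / 2 : ℝ) ^ (n + 1) * (Phi a b n z' - Phi a b n z))
      (H z' - H z) := fun z z' => by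
    have h1 := ((hs z').hasSum.sub (hs z).hasSum).add (hasSum_weights.mul_right (z' - z))
    have e1 : H z' - H z = ∑' n, c n z' - ∑' n, c n z + 1 * (z' - z) := by
      simp only [H]
      ring
    rw [e1]
    refine h1.congr_fun fun n => ?_
    simp only [c]
    ring
  have hcont : Continuous H := by
    refine continuous_id.add (continuous_tsum (fun n => ?_) hasSum_weights.summable hb)
    have := Phi_continuous a b n
    fun_prop
  have hmono : StrictMono H := fun z z' hz => by
    have h1 := le_hasSum (hH z z') 0 fun n _ =>
      mul_nonneg (by positivity) (sub_nonneg.2 (Phi_monotone a b n hz.le))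
    simp only [Phi] at h1
    norm_num at h1
    linarith
  have hone : ∀ z, H (z + 1) = H z + 1 := fun z => by
    have h1 := hH z (z + 1)
    simp only [Phi_add_one, add_sub_cancel_left, mul_one] at h1
    linarith [h1.unique hasSum_weights]
  obtain ⟨h, hh⟩ := exists_unit H hmono hcont hone
  exact ⟨h, by rw [hh]; exact hH⟩

lemma exists_conj_bilipschitz (a b : G) :
    ∃ h : G, Bilip (h * a * h⁻¹ : G) ∧ Bilip (h * b * h⁻¹ : G) := by
  obtain ⟨h, hh⟩ := exists_average a b
  have key : ∀ s : G, s = a ∨ s = a⁻¹ ∨ s = b ∨ s = b⁻¹ → ∀ z z', z ≤ z' →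
      h (s z') - h (s z) ≤ 8 * (h z' - h z) := by
    intro s hs z z' hz
    have h1 := hh (s z) (s z')
    have h2 := ((hasSum_nat_add_iff' 1).2 (hh z z')).mul_left 8
    have h3 := hasSum_le (fun n => ?_) h1 h2
    · simp only [Finset.sum_range_one, Phi] at h3
      linarith
    · -- `Φₙ ∘ s` is one of the four nondecreasing summands of `4 Φₙ₊₁`
      have hm : ∀ t : G, Phi a b n (t z) ≤ Phi a b n (t z') :=
        fun t => Phi_monotone a b n ((strictMono_coe t).monotone hz)
      have h4 : Phi a b n (s z') - Phi a b n (s z)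
          ≤ 4 * (Phi a b (n + 1) z' - Phi a b (n + 1) z) := by
        simp only [Phi]
        rcases hs with rfl | rfl | rfl | rfl
        · linarith [hm s⁻¹, hm b, hm b⁻¹]
        · linarith [hm a, hm b, hm b⁻¹]
        · linarith [hm a, hm a⁻¹, hm s⁻¹]
        · linarith [hm a, hm a⁻¹, hm b]
      have h5 := mul_le_mul_of_nonneg_left h4 (by positivity : (0 : ℝ) ≤ (1 / 2 : ℝ) ^ (n + 1))
      refine h5.trans (le_of_eq ?_)
      rw [pow_succ (1 / 2 : ℝ) (n + 1)]
      ring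
  have bil : ∀ s : G, (s = a ∨ s = b) → Bilip (h * s * h⁻¹ : G) := by
    intro s hs z z' hz
    obtain ⟨p, rfl⟩ : ∃ p, h p = z := ⟨(h⁻¹ : G) z, by simp⟩
    obtain ⟨q, rfl⟩ : ∃ q, h q = z' := ⟨(h⁻¹ : G) z', by simp⟩
    have hpq : p ≤ q := (strictMono_coe h).le_iff_le.1 hz
    simp only [mul_coe, CircleDeg1Lift.units_inv_apply_apply]
    refine ⟨?_, key s (by tauto) p q hpq⟩
    have h1 := key s⁻¹ (by rcases hs with rfl | rfl <;> simp) (s p) (s q)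
      ((strictMono_coe s).monotone hpq)
    simp only [CircleDeg1Lift.units_inv_apply_apply] at h1
    linarith
  exact ⟨h, bil a (Or.inl rfl), bil b (Or.inr rfl)⟩

end RotationInterval

open RotationInterval in
theorem rotation_number_set_is_interval (w : FreeGroup (Fin 2)) (x y : ℝ) :
    ∃ r R : ℝ, r ≤ R ∧
      {t : ℝ | ∃ a b : CircleDeg1Liftˣ, tau a = x ∧ tau b = y ∧
        tau (FreeGroup.lift ![a, b] w) = t} = Set.Icc r R := by
  set S := {t : ℝ | ∃ a b : CircleDeg1Liftˣ, tau a = x ∧ tau b = y ∧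
        tau (FreeGroup.lift ![a, b] w) = t} with hS
  let W : G × G → ℝ := fun p => tau (FreeGroup.lift ![p.1, p.2] w)
  have hW : Continuous W := continuous_tau.comp (continuous_word w)
  have hne : S.Nonempty := ⟨_, trans x, trans y, tau_trans x, tau_trans y, rfl⟩
  have hconn : IsPreconnected S := by
    have h := ((isPreconnected_tau_fiber x).prod (isPreconnected_tau_fiber y)).image W
      hW.continuousOn
    convert h using 1
    ext t
    constructor
    · rintro ⟨a, b, ha, hb, rfl⟩
      exact ⟨(a, b), ⟨ha, hb⟩, rfl⟩
    · rintro ⟨⟨a, b⟩, ⟨ha, hb⟩, rfl⟩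
      exact ⟨a, b, ha, hb, rfl⟩
  have hcomp : IsCompact S := by
    have h := ((isCompact_bilip_fiber x).prod (isCompact_bilip_fiber y)).image hW
    convert h using 1
    ext t
    constructor
    · rintro ⟨a, b, ha, hb, rfl⟩
      obtain ⟨h, h1, h2⟩ := exists_conj_bilipschitz a b
      refine ⟨(h * a * h⁻¹, h * b * h⁻¹), ⟨⟨h1, (tau_conj h a).trans ha⟩,
        ⟨h2, (tau_conj h b).trans hb⟩⟩, ?_⟩
      simp only [W, lift_conj, tau_conj]
    · rintro ⟨⟨a, b⟩, ⟨⟨-, ha⟩, ⟨-, hb⟩⟩, rfl⟩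
      exact ⟨a, b, ha, hb, rfl⟩
  have hicc := eq_Icc_of_connected_compact ⟨hne, hconn⟩ hcomp
  refine ⟨sInf S, sSup S, ?_, hicc⟩
  exact nonempty_Icc.1 (hicc ▸ hne)
end

section
/- A point X ∈ ℝ³ is a vertex of the Jankins–Neumann ziggurat Z̃ if and only if there exist coprime integers 0 < a < m such that X is one of the points (a/m, (m−a)/m, 1/m), ((m−a)/m, 1/m, a/m), or (1/m, (m−a)/m, a/m). -/
/-!
The ziggurat is a union of boxes whose corners, over the common denominator `m`, have numerators
`(p, q, r)` of which one is `1` and the other two are coprime to `m` with sum `m`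
(`IsBoxCorner`). A vertex of the union lies in one of these boxes, hence must be its corner. Conversely a
corner is a vertex because the corners form an antichain for the coordinatewise order
(`IsBoxCorner.antichain`): in a corner `X` two coordinates sum to `1`, and in any corner `Y` every two
coordinates sum to at most `1`, so `X ≤ Y` forces equality in these two coordinates; they are fractions
in lowest terms, so the denominators agree as well, and then so does the third coordinate.
-/

/-- The box `Π(a,b,c) = [0,a] × [0,b] × [0,c] ⊆ ℝ³`. -/
def box (a b c : ℝ) : Set (ℝ × ℝ × ℝ) :=
  Set.Icc 0 a ×ˢ Set.Icc 0 b ×ˢ Set.Icc 0 c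

/-- The Jankins--Neumann ziggurat. -/
def JNZiggurat : Set (ℝ × ℝ × ℝ) :=
  {p | ∃ a m : ℕ, 0 < a ∧ a < m ∧ Nat.Coprime a m ∧
    (p ∈ box ((a:ℝ)/m) (((m:ℝ)-a)/m) (1/(m:ℝ)) ∨
     p ∈ box ((a:ℝ)/m) (1/(m:ℝ)) (((m:ℝ)-a)/m) ∨
     p ∈ box (1/(m:ℝ)) ((a:ℝ)/m) (((m:ℝ)-a)/m))}

/-- `X` is a vertex of `Z`: `X ∈ Z` and there is no box `Π(a,b,c) ⊆ Z` with
`X ∈ Π(a,b,c) \ {(a,b,c)}`. -/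
def IsVertex (Z : Set (ℝ × ℝ × ℝ)) (X : ℝ × ℝ × ℝ) : Prop :=
  X ∈ Z ∧ ¬ ∃ a b c : ℝ, box a b c ⊆ Z ∧ X ∈ box a b c \ {((a, b, c) : ℝ × ℝ × ℝ)}

/-- `(p/m, q/m, r/m)` is the corner of one of the boxes whose union is the ziggurat: one of the
numerators is `1`, and the other two are positive, sum to `m` and are coprime to `m`. -/
def IsBoxCorner (p q r m : ℕ) : Prop :=
  0 < p ∧ 0 < q ∧ 0 < r ∧ Nat.Coprime p m ∧ Nat.Coprime q m ∧ Nat.Coprime r m ∧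
    ((p + q = m ∧ r = 1) ∨ (p + r = m ∧ q = 1) ∨ (q + r = m ∧ p = 1))

/-- Comparison of two coordinates: if `p/m + q/m = 1` while `p'/n + q'/n ≤ 1`, then
`(p/m, q/m) ≤ (p'/n, q'/n)` forces equality, and reduced fractions have equal denominators. -/
lemma eq_of_pair_le {p q m p' q' n : ℕ} (hp : 0 < p) (hs : p + q = m) (hc : Nat.Coprime p m)
    (hn : 0 < n) (hs' : p' + q' ≤ n) (hc' : Nat.Coprime p' n)
    (h1 : p * n ≤ p' * m) (h2 : q * n ≤ q' * m) : m = n ∧ p = p' ∧ q = q' := by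
  have hm : 0 < m := by omega
  have e : p * n = p' * m := by nlinarith
  have hmn : m = n := by
    apply Nat.dvd_antisymm
    · exact hc.symm.dvd_of_dvd_mul_left (e ▸ Dvd.intro_left p' rfl)
    · exact hc'.symm.dvd_of_dvd_mul_left (e ▸ Dvd.intro_left p rfl)
  subst hmn
  have e1 : p = p' := Nat.eq_of_mul_eq_mul_right hm e
  have e2 : q ≤ q' := Nat.le_of_mul_le_mul_right h2 hm
  exact ⟨rfl, e1, by omega⟩

/-- The corners form an antichain; the inequalities are `p/m ≤ p'/n` etc. with denominators cleared. -/
lemma IsBoxCorner.antichain {p q r m p' q' r' n : ℕ} (h : IsBoxCorner p q r m)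
    (h' : IsBoxCorner p' q' r' n) (h1 : p * n ≤ p' * m) (h2 : q * n ≤ q' * m)
    (h3 : r * n ≤ r' * m) : m = n ∧ p = p' ∧ q = q' ∧ r = r' := by
  obtain ⟨hp, hq, hr, cp, cq, cr, h⟩ := h
  obtain ⟨hp', hq', hr', cp', cq', cr', h'⟩ := h'
  have hn : 0 < n := by omega
  rcases h with ⟨h, _⟩ | ⟨h, _⟩ | ⟨h, _⟩
  · have := eq_of_pair_le hp h cp hn (by omega) cp' h1 h2
    omega
  · have := eq_of_pair_le hp h cp hn (by omega) cp' h1 h3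
    omega
  · have := eq_of_pair_le hq h cq hn (by omega) cq' h2 h3
    omega

lemma mem_box {x y z a b c : ℝ} :
    (x, y, z) ∈ box a b c ↔ (0 ≤ x ∧ x ≤ a) ∧ (0 ≤ y ∧ y ≤ b) ∧ (0 ≤ z ∧ z ≤ c) := by
  simp [box]
  tauto

lemma IsBoxCorner.pos {p q r m : ℕ} (h : IsBoxCorner p q r m) : 0 < m := by
  obtain ⟨hp, hq, hr, -, -, -, h⟩ := h
  omega

lemma isBoxCorner_of_coprime {a m : ℕ} (h0 : 0 < a) (h1 : a < m) (h : Nat.Coprime a m) :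
    IsBoxCorner a (m - a) 1 m ∧ IsBoxCorner a 1 (m - a) m ∧ IsBoxCorner 1 a (m - a) m := by
  have h' : Nat.Coprime (m - a) m := (Nat.coprime_self_sub_left h1.le).2 h
  refine ⟨⟨h0, ?_, one_pos, h, h', Nat.coprime_one_left m, ?_⟩,
    ⟨h0, one_pos, ?_, h, Nat.coprime_one_left m, h', ?_⟩,
    ⟨one_pos, h0, ?_, Nat.coprime_one_left m, h, h', ?_⟩⟩ <;> omega

lemma mem_JNZiggurat_iff (X : ℝ × ℝ × ℝ) :
    X ∈ JNZiggurat ↔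
      ∃ p q r m : ℕ, IsBoxCorner p q r m ∧ X ∈ box ((p : ℝ) / m) ((q : ℝ) / m) ((r : ℝ) / m) := by
  constructor
  · rintro ⟨a, m, h0, h1, hc, h⟩
    obtain ⟨c1, c2, c3⟩ := isBoxCorner_of_coprime h0 h1 hc
    rcases h with h | h | h
    · exact ⟨_, _, _, _, c1, by simpa [Nat.cast_sub h1.le] using h⟩
    · exact ⟨_, _, _, _, c2, by simpa [Nat.cast_sub h1.le] using h⟩
    · exact ⟨_, _, _, _, c3, by simpa [Nat.cast_sub h1.le] using h⟩
  · rintro ⟨p, q, r, m, ⟨hp, hq, hr, cp, cq, cr, ⟨h, rfl⟩ | ⟨h, rfl⟩ | ⟨h, rfl⟩⟩, hX⟩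
    · refine ⟨p, m, hp, by omega, cp, Or.inl ?_⟩
      simpa [← h] using hX
    · refine ⟨p, m, hp, by omega, cp, Or.inr (Or.inl ?_)⟩
      simpa [← h] using hX
    · refine ⟨q, m, hq, by omega, cq, Or.inr (Or.inr ?_)⟩
      simpa [← h] using hX

lemma exists_isBoxCorner_iff (X : ℝ × ℝ × ℝ) :
    (∃ p q r m : ℕ, IsBoxCorner p q r m ∧ X = ((p : ℝ) / m, (q : ℝ) / m, (r : ℝ) / m)) ↔
    ∃ a m : ℕ, 0 < a ∧ a < m ∧ Nat.Coprime a m ∧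
      (X = (((a:ℝ)/m, ((m:ℝ)-a)/m, 1/(m:ℝ)) : ℝ × ℝ × ℝ) ∨
       X = ((((m:ℝ)-a)/m, 1/(m:ℝ), (a:ℝ)/m) : ℝ × ℝ × ℝ) ∨
       X = ((1/(m:ℝ), ((m:ℝ)-a)/m, (a:ℝ)/m) : ℝ × ℝ × ℝ)) := by
  constructor
  · rintro ⟨p, q, r, m, ⟨hp, hq, hr, cp, cq, cr, ⟨h, rfl⟩ | ⟨h, rfl⟩ | ⟨h, rfl⟩⟩, rfl⟩
    · exact ⟨p, m, hp, by omega, cp, Or.inl (by simp [← h])⟩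
    · exact ⟨r, m, hr, by omega, cr, Or.inr (Or.inl (by simp [← h]))⟩
    · exact ⟨r, m, hr, by omega, cr, Or.inr (Or.inr (by simp [← h]))⟩
  · rintro ⟨a, m, h0, h1, hc, h⟩
    -- In the last two forms the roles of `a` and `m - a` are exchanged.
    have hc' : Nat.Coprime (m - a) m := (Nat.coprime_self_sub_left h1.le).2 hc
    obtain ⟨c1, -, -⟩ := isBoxCorner_of_coprime h0 h1 hc
    obtain ⟨-, c2, c3⟩ := isBoxCorner_of_coprime (Nat.sub_pos_of_lt h1) (by omega) hc'
    rw [Nat.sub_sub_self h1.le] at c2 c3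
    rcases h with rfl | rfl | rfl
    · exact ⟨_, _, _, _, c1, by simp [Nat.cast_sub h1.le]⟩
    · exact ⟨_, _, _, _, c2, by simp [Nat.cast_sub h1.le]⟩
    · exact ⟨_, _, _, _, c3, by simp [Nat.cast_sub h1.le]⟩

theorem vertices_of_JN_ziggurat (X : ℝ × ℝ × ℝ) :
    IsVertex JNZiggurat X ↔
    ∃ a m : ℕ, 0 < a ∧ a < m ∧ Nat.Coprime a m ∧
      (X = (((a:ℝ)/m, ((m:ℝ)-a)/m, 1/(m:ℝ)) : ℝ × ℝ × ℝ) ∨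
       X = ((((m:ℝ)-a)/m, 1/(m:ℝ), (a:ℝ)/m) : ℝ × ℝ × ℝ) ∨
       X = ((1/(m:ℝ), ((m:ℝ)-a)/m, (a:ℝ)/m) : ℝ × ℝ × ℝ)) := by
  rw [← exists_isBoxCorner_iff]
  constructor
  · rintro ⟨hX, hno⟩
    obtain ⟨p, q, r, m, hc, hm⟩ := (mem_JNZiggurat_iff X).1 hX
    refine ⟨p, q, r, m, hc, ?_⟩
    by_contra hne
    exact hno ⟨_, _, _, fun Y hY => (mem_JNZiggurat_iff Y).2 ⟨p, q, r, m, hc, hY⟩, hm, hne⟩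
  · rintro ⟨p, q, r, m, hc, rfl⟩
    refine ⟨(mem_JNZiggurat_iff _).2 ⟨p, q, r, m, hc, mem_box.2 ?_⟩, ?_⟩
    · refine ⟨⟨?_, le_rfl⟩, ⟨?_, le_rfl⟩, ⟨?_, le_rfl⟩⟩ <;> positivity
    · rintro ⟨a, b, c, hsub, hX, hne⟩
      obtain ⟨⟨x0, x1⟩, ⟨y0, y1⟩, ⟨z0, z1⟩⟩ := mem_box.1 hX
      -- The far corner `(a, b, c)` lies in a generating box, whose corner therefore dominates `X`.
      have hmem : (a, b, c) ∈ JNZiggurat := hsub (mem_box.2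
        ⟨⟨x0.trans x1, le_rfl⟩, ⟨y0.trans y1, le_rfl⟩, ⟨z0.trans z1, le_rfl⟩⟩)
      obtain ⟨p', q', r', n, hc', hm'⟩ := (mem_JNZiggurat_iff _).1 hmem
      obtain ⟨⟨-, x2⟩, ⟨-, y2⟩, ⟨-, z2⟩⟩ := mem_box.1 hm'
      have hm0 : (0 : ℝ) < m := by exact_mod_cast hc.pos
      have hn0 : (0 : ℝ) < n := by exact_mod_cast hc'.pos
      have hle : ∀ {k l : ℕ} {t : ℝ}, (k : ℝ) / m ≤ t → t ≤ (l : ℝ) / n → k * n ≤ l * m := by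
        intro k l t h1 h2
        have h := (div_le_div_iff₀ hm0 hn0).1 (h1.trans h2)
        exact_mod_cast h
      obtain ⟨rfl, rfl, rfl, rfl⟩ := hc.antichain hc' (hle x1 x2) (hle y1 y2) (hle z1 z2)
      apply hne
      rw [le_antisymm x1 x2, le_antisymm y1 y2, le_antisymm z1 z2]
      rfl
end

section
/- The set Δ is self-similar under the projective maps T₁ and T₂: one has Δ = T₁(Δ) ∪ T₂(Δ) ∪ {(1/2, 1/2)}, and the three sets T₁(Δ), T₂(Δ) and {(1/2,1/2)} are pairwise disjoint. -/
/-!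
Write `P q r = (r/q, (q-1)/q)` for the point of `Δ` attached to the fraction `r/q`. The maps act
on these points by `T₁ (P q r) = P (q+r) r` and `T₂ (P q r) = P (2q-r) q`, and both substitutions
preserve coprimality and `0 < r < q`. Conversely, `P q r` is `T₁ (P (q-r) r)` when `2r < q` and
`T₂ (P r (2r-q))` when `2r > q`, while `2r = q` with `r, q` coprime forces `r/q = 1/2`.
The three pieces are therefore the parts of `Δ` with `x < 1/2`, `x > 1/2` and `x = 1/2`, which
gives disjointness.
-/

/-- The set `Δ`: projections to the `xy`-plane of one family of vertices of the
ab-ziggurat. -/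
def Delta : Set (ℝ × ℝ) :=
  {p | ∃ q r : ℕ, 0 < r ∧ r < q ∧ Nat.Coprime r q ∧ p = ((r:ℝ)/q, ((q:ℝ)-1)/q)}

noncomputable def T1 : ℝ × ℝ → ℝ × ℝ :=
  fun p => (p.1 / (1 + p.1), (p.1 + p.2) / (1 + p.1))

noncomputable def T2 : ℝ × ℝ → ℝ × ℝ :=
  fun p => (1 / (2 - p.1), (1 + p.2 - p.1) / (2 - p.1))

lemma T1_point {q r : ℕ} (hq : 0 < q) :
    T1 ((r:ℝ)/q, ((q:ℝ)-1)/q) = ((r:ℝ)/((q + r : ℕ):ℝ), (((q + r : ℕ):ℝ)-1)/((q + r : ℕ):ℝ)) := by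
  have hq' : (0:ℝ) < q := by exact_mod_cast hq
  have hr' : (0:ℝ) ≤ r := Nat.cast_nonneg r
  have h1 : (q:ℝ) + r ≠ 0 := by positivity
  have h2 : 1 + (r:ℝ)/q ≠ 0 := by positivity
  simp only [T1, Prod.mk.injEq]
  push_cast
  constructor
  · rw [div_eq_div_iff h2 h1]
    field_simp
  · rw [div_eq_div_iff h2 h1]
    field_simp
    ring

/-- The new denominator `s = 2q - r` is given by `s + r = 2q` to avoid truncated subtraction. -/
lemma T2_point {q r s : ℕ} (hrq : r < q) (hs : s + r = 2 * q) :
    T2 ((r:ℝ)/q, ((q:ℝ)-1)/q) = ((q:ℝ)/s, ((s:ℝ)-1)/s) := by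
  have hq' : (0:ℝ) < q := by exact_mod_cast (by omega : 0 < q)
  have hs' : (0:ℝ) < s := by exact_mod_cast (by omega : 0 < s)
  have hr : (r:ℝ) = 2 * q - s := by
    have : (s:ℝ) + r = 2 * q := by exact_mod_cast hs
    linarith
  have hd : 2 - (r:ℝ)/q = s / q := by
    rw [hr]
    field_simp
    ring
  simp only [T2, Prod.mk.injEq]
  rw [hd]
  constructor
  · field_simp
  · rw [hr]
    field_simp
    ring

lemma Delta_fst_mem {p : ℝ × ℝ} (hp : p ∈ Delta) : 0 < p.1 ∧ p.1 < 1 := by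
  obtain ⟨q, r, hr, hrq, -, rfl⟩ := hp
  have hr' : (0:ℝ) < r := by exact_mod_cast hr
  have hrq' : (r:ℝ) < q := by exact_mod_cast hrq
  have hq' : (0:ℝ) < q := hr'.trans hrq'
  exact ⟨div_pos hr' hq', (div_lt_one hq').2 hrq'⟩

lemma T1_fst_lt {p : ℝ × ℝ} (hp : p ∈ T1 '' Delta) : p.1 < 1/2 := by
  obtain ⟨p, hp, rfl⟩ := hp
  obtain ⟨h0, h1⟩ := Delta_fst_mem hp
  simp only [T1]
  rw [div_lt_div_iff₀ (by linarith) (by norm_num)]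
  linarith

lemma lt_T2_fst {p : ℝ × ℝ} (hp : p ∈ T2 '' Delta) : 1/2 < p.1 := by
  obtain ⟨p, hp, rfl⟩ := hp
  obtain ⟨h0, h1⟩ := Delta_fst_mem hp
  simp only [T2]
  rw [div_lt_div_iff₀ (by norm_num) (by linarith)]
  linarith

theorem Delta_self_similar :
    Delta = T1 '' Delta ∪ T2 '' Delta ∪ {((1/2 : ℝ), (1/2 : ℝ))} ∧
    Disjoint (T1 '' Delta) (T2 '' Delta) ∧
    Disjoint (T1 '' Delta) {((1/2 : ℝ), (1/2 : ℝ))} ∧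
    Disjoint (T2 '' Delta) {((1/2 : ℝ), (1/2 : ℝ))} := by
  refine ⟨Set.Subset.antisymm ?_ ?_, ?_, ?_, ?_⟩
  · rintro p ⟨q, r, hr, hrq, hc, rfl⟩
    rcases lt_trichotomy (2 * r) q with h | h | h
    · obtain ⟨t, rfl⟩ := Nat.exists_eq_add_of_lt hrq
      refine Or.inl (Or.inl ⟨_, ⟨t + 1, r, hr, by omega, ?_, rfl⟩, ?_⟩)
      · simpa [add_assoc] using hc
      · rw [T1_point (by omega), show t + 1 + r = r + t + 1 by omega]
    · subst h
      have h1 : r = 1 := Nat.Coprime.eq_one_of_dvd hc (Dvd.intro_left 2 rfl)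
      subst h1
      right
      norm_num
    · obtain ⟨t, ht⟩ := Nat.exists_eq_add_of_lt h
      refine Or.inl (Or.inr ⟨_, ⟨r, t + 1, by omega, by omega, ?_, rfl⟩, ?_⟩)
      · -- a common divisor of `2r - q` and `r` divides `q`
        refine Nat.eq_one_of_dvd_coprimes hc (Nat.gcd_dvd_right _ _) ?_
        refine (Nat.dvd_add_left (Nat.gcd_dvd_left (t + 1) r)).1 ?_
        rw [show q + (t + 1) = 2 * r by omega]
        exact (Nat.gcd_dvd_right _ _).mul_left 2
      · exact T2_point (by omega) (by omega)
  · rintro p ((⟨_, ⟨q, r, hr, hrq, hc, rfl⟩, rfl⟩ | ⟨_, ⟨q, r, hr, hrq, hc, rfl⟩, rfl⟩) | hp)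
    · exact ⟨q + r, r, hr, by omega, by simpa using hc, T1_point (by omega)⟩
    · obtain ⟨t, rfl⟩ := Nat.exists_eq_add_of_lt hrq
      refine ⟨r + t + 1 + (t + 1), r + t + 1, by omega, by omega, ?_,
        T2_point hrq (by omega)⟩
      -- `gcd(q, 2q - r) = gcd(q, q - r) = gcd(r, q - r) = gcd(r, q)`
      have h1 : Nat.Coprime r (t + 1) := by simpa [add_assoc] using hc
      rw [Nat.coprime_self_add_right, add_assoc, Nat.coprime_add_self_left]
      exact h1
    · rw [Set.mem_singleton_iff] at hp
      exact ⟨2, 1, by norm_num, by norm_num, by norm_num, by rw [hp]; norm_num⟩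
  · exact Set.disjoint_left.2 fun p h1 h2 => lt_asymm (T1_fst_lt h1) (lt_T2_fst h2)
  · refine Set.disjoint_singleton_right.2 fun h => ?_
    exact lt_irrefl _ (T1_fst_lt h)
  · refine Set.disjoint_singleton_right.2 fun h => ?_
    exact lt_irrefl _ (lt_T2_fst h)
end

section
/- For all x, y ∈ ℝ, the supremum defining F(x,y) is attained: there exist a positive integer q and integers p₁, p₂ with p₁ ≤ q·x and p₂ ≤ q·y such that for every positive integer q' and all integers p₁', p₂' with p₁' ≤ q'·x and p₂' ≤ q'·y one has (p₁'+p₂'+1)/q' ≤ (p₁+p₂+1)/q; consequently F(x,y) = (p₁+p₂+1)/q is a rational number. -/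
/-- Simultaneous recurrence on the torus: a convergent subsequence of `({n x}, {n y})` has
terms arbitrarily close together, and the difference of their indices serves as `N`. -/
lemma exists_recurrence (x y ε : ℝ) (hε : 0 < ε) :
    ∃ N : ℕ, 2 ≤ N ∧ ∃ k l : ℤ, |N * x - k| < ε ∧ |N * y - l| < ε := by
  have hK : IsCompact (Set.Icc (0 : ℝ) 1 ×ˢ Set.Icc (0 : ℝ) 1) := isCompact_Icc.prod isCompact_Icc
  obtain ⟨a, -, φ, hφ, hlim⟩ := hK.tendsto_subseq
    (x := fun n : ℕ => (Int.fract (n * x), Int.fract (n * y)))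
    (fun n => ⟨⟨Int.fract_nonneg _, (Int.fract_lt_one _).le⟩,
      ⟨Int.fract_nonneg _, (Int.fract_lt_one _).le⟩⟩)
  obtain ⟨m, hm⟩ := Metric.cauchySeq_iff.mp hlim.cauchySeq ε hε
  have h := hm (m + 2) (by omega) m le_rfl
  have h1 := hφ (show m < m + 1 by omega)
  have h2 := hφ (show m + 1 < m + 2 by omega)
  rw [Prod.dist_eq, max_lt_iff] at h
  simp only [Function.comp, Real.dist_eq, Int.fract] at h
  refine ⟨φ (m + 2) - φ m, by omega, ⌊φ (m + 2) * x⌋ - ⌊φ m * x⌋,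
    ⌊φ (m + 2) * y⌋ - ⌊φ m * y⌋, ?_, ?_⟩
  · rw [Nat.cast_sub (by omega)]
    refine lt_of_eq_of_lt (congrArg _ ?_) h.1
    push_cast
    ring
  · rw [Nat.cast_sub (by omega)]
    refine lt_of_eq_of_lt (congrArg _ ?_) h.2
    push_cast
    ring

lemma exists_ge_add (x y : ℝ) :
    ∃ q : ℕ, 0 < q ∧ ∃ p₁ p₂ : ℤ, (p₁ : ℝ) ≤ q * x ∧ (p₂ : ℝ) ≤ q * y ∧
      x + y ≤ ((p₁ : ℝ) + p₂ + 1) / q := by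
  by_cases h : x + y ≤ ⌊x⌋ + ⌊y⌋ + 1
  · exact ⟨1, one_pos, ⌊x⌋, ⌊y⌋, by simpa using Int.floor_le x, by simpa using Int.floor_le y,
      by simpa using h⟩
  push Not at h
  have hx := Int.lt_floor_add_one x
  have hy := Int.lt_floor_add_one y
  obtain ⟨ε, hε, hε'⟩ := exists_between
    (show 0 < min (min (⌊x⌋ + 1 - x) (⌊y⌋ + 1 - y)) ((x + y - ⌊x⌋ - ⌊y⌋ - 1) / 2) from
      lt_min (lt_min (by linarith) (by linarith)) (by linarith))
  rw [lt_min_iff, lt_min_iff] at hε'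
  obtain ⟨⟨e1, e2⟩, e3⟩ := hε'
  obtain ⟨N, hN, k, l, hk, hl⟩ := exists_recurrence x y ε hε
  rw [abs_lt] at hk hl
  have hN' : (2 : ℝ) ≤ N := by exact_mod_cast hN
  refine ⟨N - 1, by omega, k - ⌊x⌋ - 1, l - ⌊y⌋ - 1, ?_⟩
  rw [Nat.cast_sub (by omega)]
  push_cast
  refine ⟨by linarith, by linarith, ?_⟩
  rw [le_div_iff₀ (by linarith)]
  linarith

/-- The maximum exists: either some value exceeds `x + y` and only finitely many `q` compete with
it, or `x + y` is an upper bound that `exists_ge_add` reaches. -/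
lemma exists_max (x y : ℝ) :
    ∃ q : ℕ, 0 < q ∧ ∃ p₁ p₂ : ℤ, (p₁ : ℝ) ≤ q * x ∧ (p₂ : ℝ) ≤ q * y ∧
      (∀ q' : ℕ, 0 < q' → ∀ p₁' p₂' : ℤ, (p₁' : ℝ) ≤ q' * x → (p₂' : ℝ) ≤ q' * y →
        ((p₁' : ℝ) + (p₂' : ℝ) + 1) / q' ≤ ((p₁ : ℝ) + (p₂ : ℝ) + 1) / q) := by
  by_cases h : ∃ q : ℕ, 0 < q ∧ ∃ p₁ p₂ : ℤ, (p₁ : ℝ) ≤ q * x ∧ (p₂ : ℝ) ≤ q * y ∧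
      x + y < ((p₁ : ℝ) + p₂ + 1) / q
  · obtain ⟨q₀, hq₀, a, b, ha, hb, hab⟩ := h
    set g : ℕ → ℝ := fun q => ((⌊q * x⌋ : ℝ) + ⌊q * y⌋ + 1) / q with hg
    have hle : ∀ q : ℕ, 0 < q → ∀ p₁ p₂ : ℤ, (p₁ : ℝ) ≤ q * x → (p₂ : ℝ) ≤ q * y →
        ((p₁ : ℝ) + p₂ + 1) / q ≤ g q := by
      intro q hq p₁ p₂ h1 h2
      have h1' : (p₁ : ℝ) ≤ ⌊q * x⌋ := by exact_mod_cast Int.le_floor.mpr h1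
      have h2' : (p₂ : ℝ) ≤ ⌊q * y⌋ := by exact_mod_cast Int.le_floor.mpr h2
      simp only [hg]
      gcongr
    have h0 : x + y < g q₀ := hab.trans_le (hle q₀ hq₀ a b ha hb)
    -- Beyond `M` the bound `g q ≤ x + y + 1 / q` drops below `g q₀`.
    obtain ⟨M, hM⟩ := exists_nat_gt (1 / (g q₀ - (x + y)))
    have hne : (Finset.Icc 1 (max M q₀)).Nonempty := ⟨q₀, by simp; omega⟩
    obtain ⟨q, hq, hmax⟩ := Finset.exists_max_image _ g hne
    rw [Finset.mem_Icc] at hq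
    refine ⟨q, by omega, ⌊q * x⌋, ⌊q * y⌋, Int.floor_le _, Int.floor_le _, ?_⟩
    intro q' hq' p₁ p₂ h1 h2
    change _ ≤ g q
    by_cases hs : q' ≤ max M q₀
    · exact (hle q' hq' p₁ p₂ h1 h2).trans (hmax q' (by rw [Finset.mem_Icc]; omega))
    · refine le_trans ?_ (hmax q₀ (by rw [Finset.mem_Icc]; omega))
      have hMq : (M : ℝ) ≤ q' := by
        have : M ≤ q' := by omega
        exact_mod_cast this
      have hpos : (0 : ℝ) < q' := by exact_mod_cast hq'
      have h3 := hM.trans_le hMq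
      rw [div_lt_iff₀ (by linarith)] at h3
      rw [div_le_iff₀ hpos]
      linarith
  · push Not at h
    obtain ⟨q, hq, p₁, p₂, h1, h2, h3⟩ := exists_ge_add x y
    exact ⟨q, hq, p₁, p₂, h1, h2, fun q' hq' a b ha hb => (h q' hq' a b ha hb).trans h3⟩

theorem F_sup_attained_and_rational (x y : ℝ) :
    ∃ q : ℕ, 0 < q ∧ ∃ p₁ p₂ : ℤ, (p₁ : ℝ) ≤ q * x ∧ (p₂ : ℝ) ≤ q * y ∧
      (∀ q' : ℕ, 0 < q' → ∀ p₁' p₂' : ℤ, (p₁' : ℝ) ≤ q' * x → (p₂' : ℝ) ≤ q' * y →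
        ((p₁' : ℝ) + (p₂' : ℝ) + 1) / q' ≤ ((p₁ : ℝ) + (p₂ : ℝ) + 1) / q) ∧
      F x y = ((p₁ : ℝ) + (p₂ : ℝ) + 1) / q := by
  obtain ⟨q, hq, p₁, p₂, h1, h2, h⟩ := exists_max x y
  refine ⟨q, hq, p₁, p₂, h1, h2, h, IsGreatest.csSup_eq ⟨⟨q, hq, p₁, p₂, h1, h2, rfl⟩, ?_⟩⟩
  rintro _ ⟨q', hq', a, b, ha, hb, rfl⟩
  exact h q' hq' a b ha hb
end

section
/- Let Δ' be the set of intersection points of the lines of the green family with the lines of the red family, where for each positive integer m the green line is the line through (0,1) of slope −1/m (i.e. y = 1 − x/m) and for each positive integer k the red line is the line through (1,1) of slope 1/k (i.e. y = (k−1)/k + x/k). Then Δ consists exactly of the points of Δ' of least possible ordinate for a given abscissa: Δ = { (x,y) ∈ Δ' : for all y' < y, (x,y') ∉ Δ' }. -/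
/-- The set `Δ'` of intersection points of the green lines `y = 1 - x/m` (`m ≥ 1`)
with the red lines `y = (k-1)/k + x/k` (`k ≥ 1`). -/
def Delta' : Set (ℝ × ℝ) :=
  {p | ∃ m k : ℕ, 0 < m ∧ 0 < k ∧
    p.2 = 1 - p.1 / (m:ℝ) ∧ p.2 = ((k:ℝ) - 1) / k + p.1 / k}

theorem mem_Delta'_iff (p : ℝ × ℝ) :
    p ∈ Delta' ↔ ∃ n m : ℕ, 0 < m ∧ m < n ∧ p = ((m:ℝ)/n, ((n:ℝ)-1)/n) := by
  obtain ⟨x, y⟩ := p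
  constructor
  · rintro ⟨m, k, hm, hk, h1, h2⟩
    have hm' : (0:ℝ) < m := by exact_mod_cast hm
    have hk' : (0:ℝ) < k := by exact_mod_cast hk
    have hn : (0:ℝ) < m + k := by positivity
    simp only at h1 h2
    have hx : x = m / (m + k) := by
      rw [h1] at h2
      field_simp at h2 ⊢
      linarith
    refine ⟨m + k, m, hm, by omega, ?_⟩
    rw [h1, hx]
    push_cast
    refine Prod.ext rfl ?_
    simp only
    field_simp
  · rintro ⟨n, m, hm, hmn, h⟩
    obtain ⟨k, rfl⟩ := Nat.exists_eq_add_of_lt hmn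
    have hm' : (0:ℝ) < m := by exact_mod_cast hm
    have hn : (0:ℝ) < (m:ℝ) + k + 1 := by positivity
    have hk' : (0:ℝ) < (k:ℝ) + 1 := by positivity
    obtain ⟨rfl, rfl⟩ := Prod.mk.inj h
    refine ⟨m, k + 1, hm, by omega, ?_, ?_⟩
    · push_cast
      field_simp
    · push_cast
      field_simp
      ring

theorem ordinate_le {q n : ℕ} (hq : 0 < q) (h : q ≤ n) :
    ((q:ℝ)-1)/q ≤ ((n:ℝ)-1)/n := by
  have hq' : (0:ℝ) < q := by exact_mod_cast hq
  have h' : (q:ℝ) ≤ n := by exact_mod_cast h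
  rw [div_le_div_iff₀ hq' (hq'.trans_le h')]
  linarith

theorem Delta_eq_least_ordinate_points_of_Delta' :
    Delta = {p : ℝ × ℝ | p ∈ Delta' ∧ ∀ y' : ℝ, y' < p.2 → (p.1, y') ∉ Delta'} := by
  ext p
  simp only [Set.mem_ofPred_eq, mem_Delta'_iff]
  constructor
  · rintro ⟨q, r, hr, hrq, hc, rfl⟩
    refine ⟨⟨q, r, hr, hrq, rfl⟩, ?_⟩
    rintro y' hy ⟨n, m, hm, hmn, h⟩
    obtain ⟨hx, rfl⟩ := Prod.mk.inj h
    have hq0 : (q:ℝ) ≠ 0 := by exact_mod_cast (hr.trans hrq).ne'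
    have hn0 : (n:ℝ) ≠ 0 := by exact_mod_cast (hm.trans hmn).ne'
    have hcross : r * n = m * q := by
      simp only at hx
      rw [div_eq_div_iff hq0 hn0] at hx
      exact_mod_cast hx
    have hdvd : q ∣ n := hc.symm.dvd_of_dvd_mul_left (hcross ▸ dvd_mul_left q m)
    exact absurd hy (not_lt.mpr
      (ordinate_le (hr.trans hrq) (Nat.le_of_dvd (hm.trans hmn) hdvd)))
  · rintro ⟨⟨n, m, hm, hmn, rfl⟩, hmin⟩
    obtain ⟨g, r, q, hg, hc, rfl, rfl⟩ := Nat.exists_coprime' (Nat.gcd_pos_of_pos_left n hm)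
    have hr : 0 < r := Nat.pos_of_mul_pos_right hm
    have hrq : r < q := lt_of_mul_lt_mul_right hmn (Nat.zero_le g)
    have hg0 : (g:ℝ) ≠ 0 := by exact_mod_cast hg.ne'
    have hx : ((r * g : ℕ) : ℝ) / ((q * g : ℕ) : ℝ) = (r:ℝ) / q := by
      push_cast
      exact mul_div_mul_right _ _ hg0
    -- The reduced fraction gives a point of `Δ'` over the same abscissa, so minimality forces
    -- the two ordinates to agree.
    have hle : (((q * g : ℕ) : ℝ) - 1) / ((q * g : ℕ) : ℝ) ≤ ((q:ℝ) - 1) / q := by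
      by_contra hlt
      exact hmin _ (not_le.mp hlt) ⟨q, r, hr, hrq, by rw [hx]⟩
    exact ⟨q, r, hr, hrq, hc, Prod.ext hx
      (le_antisymm hle (ordinate_le (hr.trans hrq) (Nat.le_mul_of_pos_right q hg)))⟩
end

section
/- The union over all positive integers q and all positive integers p₁, p₂, p₃ with p₁ + p₂ + p₃ = q + 1 of the boxes Π(p₁/q, p₂/q, p₃/q) equals the union over all coprime integers 0 < a < m of the boxes Π(a/m, (m−a)/m, 1/m), Π(a/m, 1/m, (m−a)/m) and Π(1/m, a/m, (m−a)/m). (This establishes the equivalence of the Calegari–Walker description of the ziggurat with the Jankins–Neumann one.) -/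
/-- Farey neighbours `a/b < c/d` strictly enclosing `[p₁/q, 1 - p₂/q]` have denominators small
enough for their mediant to be an admissible candidate: `(b + d) * p₃ ≤ q`. -/
lemma bracket_denominators (p₁ p₂ p₃ q : ℤ) (h3 : 1 ≤ p₃) (h31 : p₃ ≤ p₁) (h32 : p₃ ≤ p₂)
    (hs : p₁ + p₂ + p₃ = q + 1) (a b c d : ℤ) (hb : 1 ≤ b) (hd : 1 ≤ d)
    (hdet : b * c - a * d = 1) (hl : a * q < p₁ * b) (hr : (q - p₂) * d < c * q) :
    (b + d) * p₃ ≤ q := by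
  by_contra hlt
  push Not at hlt
  have hq : 1 ≤ q := by linarith
  -- `d * (p₁ b - a q) + b * (c q - (q - p₂) d) = q - b d (p₃ - 1)`, with both brackets at least `1`
  have key : b * d * (p₃ - 1) + b + d ≤ q := by
    have e1 : 0 ≤ d * (p₁ * b - a * q - 1) := mul_nonneg (by linarith) (by linarith)
    have e2 : 0 ≤ b * (c * q - (q - p₂) * d - 1) := mul_nonneg (by linarith) (by linarith)
    have e3 : d * (p₁ * b - a * q - 1) + b * (c * q - (q - p₂) * d - 1)
        = (b * c - a * d) * q - b * d * (q - p₂ - p₁) - b - d := by ring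
    have e4 : q - p₂ - p₁ = p₃ - 1 := by linarith
    rw [hdet, e4] at e3
    linarith
  have hbd : b = 1 ∨ d = 1 := by
    by_contra hne
    push Not at hne
    have hb2 : 2 ≤ b := by have := hne.1; omega
    have hd2 : 2 ≤ d := by have := hne.2; omega
    have e : 0 ≤ ((b - 1) * (d - 1) - 1) * (p₃ - 1) :=
      mul_nonneg (by nlinarith) (by linarith)
    nlinarith
  have hab : a < b := by
    by_contra hcon
    push Not at hcon
    nlinarith
  have hc0 : 0 < c := by
    by_contra hcon
    push Not at hcon
    have : 0 ≤ (q - p₂) * d := mul_nonneg (by linarith) (by linarith)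
    nlinarith
  rcases hbd with rfl | rfl
  · have ha : a = 0 := by
      by_contra hne
      have : a ≤ -1 := by omega
      nlinarith
    subst ha
    have hc : c = 1 := by linarith
    subst hc
    have e1 : 0 ≤ (d - 1) * (p₃ - 1) := mul_nonneg (by linarith) (by linarith)
    have e2 : 0 ≤ d * (p₁ - p₃) := mul_nonneg (by linarith) (by linarith)
    have e3 : q - p₂ = p₁ + p₃ - 1 := by linarith
    rw [e3] at hr
    nlinarith
  · have hc : c = 1 := by
      by_contra hne
      have : 2 ≤ c := by omega
      nlinarith
    subst hc
    have ha : a = b - 1 := by linarith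
    subst ha
    have e1 : 0 ≤ (b - 1) * (p₃ - 1) := mul_nonneg (by linarith) (by linarith)
    have e2 : 0 ≤ b * (p₂ - p₃) := mul_nonneg (by linarith) (by linarith)
    have e3 : p₁ = q + 1 - p₂ - p₃ := by linarith
    rw [e3] at hl
    nlinarith

/-- The Stern–Brocot search; `n` bounds the number of remaining steps. -/
lemma exists_fraction_of_bracket (p₁ p₂ p₃ q : ℤ) (h3 : 1 ≤ p₃) (h31 : p₃ ≤ p₁) (h32 : p₃ ≤ p₂)
    (hs : p₁ + p₂ + p₃ = q + 1) (n : ℕ) : ∀ a b c d : ℤ, 1 ≤ b → 1 ≤ d →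
    b * c - a * d = 1 → a * q < p₁ * b → (q - p₂) * d < c * q → q + 1 - (b + d) ≤ n →
    ∃ x m : ℤ, 0 < m ∧ m * p₃ ≤ q ∧ m * p₁ ≤ x * q ∧ x * q ≤ m * (q - p₂) := by
  induction n with
  | zero =>
    intro a b c d hb hd hdet hl hr hn
    have := bracket_denominators p₁ p₂ p₃ q h3 h31 h32 hs a b c d hb hd hdet hl hr
    push_cast at hn
    nlinarith
  | succ n ih =>
    intro a b c d hb hd hdet hl hr hn
    have hden := bracket_denominators p₁ p₂ p₃ q h3 h31 h32 hs a b c d hb hd hdet hl hr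
    push_cast at hn
    by_cases hL : (a + c) * q < p₁ * (b + d)
    · exact ih (a + c) (b + d) c d (by linarith) hd (by linarith) hL hr (by linarith)
    by_cases hR : (q - p₂) * (b + d) < (a + c) * q
    · exact ih a b (a + c) (b + d) hb (by linarith) (by linarith) hl hR (by linarith)
    exact ⟨a + c, b + d, by linarith, hden, by linarith, by linarith⟩

/-- When `p₃` is the smallest numerator, `Π(p₁/q, p₂/q, p₃/q) ⊆ Π(a/m, (m-a)/m, 1/m)` for some
coprime `0 < a < m`, stated through the three side lengths. -/
lemma exists_coprime_dominating (p₁ p₂ p₃ q : ℕ) (h3 : 0 < p₃) (h31 : p₃ ≤ p₁) (h32 : p₃ ≤ p₂)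
    (hs : p₁ + p₂ + p₃ = q + 1) :
    ∃ a m : ℕ, 0 < a ∧ a < m ∧ Nat.Coprime a m ∧ (p₁ : ℝ) / q ≤ (a : ℝ) / m ∧
      (p₂ : ℝ) / q ≤ ((m : ℝ) - a) / m ∧ (p₃ : ℝ) / q ≤ 1 / (m : ℝ) := by
  obtain ⟨x, m, hm, hm3, hx1, hx2⟩ := exists_fraction_of_bracket p₁ p₂ p₃ q (by omega) (by omega)
    (by omega) (by omega) (q + 1) 0 1 1 1 (by omega) (by omega) (by omega) (by omega) (by omega)
    (by omega)
  have hq : 0 < q := by omega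
  have hx : 0 < x := by
    have : 0 < m * (p₁ : ℤ) := mul_pos hm (by omega)
    by_contra hcon
    push Not at hcon
    nlinarith
  lift m to ℕ using hm.le
  lift x to ℕ using hx.le
  norm_cast at hm hx hm3 hx1
  obtain ⟨g, a, k, hg, hcop, rfl, rfl⟩ := Nat.exists_coprime' (Nat.gcd_pos_of_pos_left m hx)
  have ha : 0 < a := Nat.pos_of_mul_pos_right hx
  have hk : 0 < k := Nat.pos_of_mul_pos_right hm
  have h1 : k * p₁ ≤ a * q := by
    refine Nat.le_of_mul_le_mul_left ?_ hg
    linarith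
  have h2 : (a : ℤ) * q ≤ k * (q - p₂) := by
    refine le_of_mul_le_mul_left ?_ (show (0 : ℤ) < g by exact_mod_cast hg)
    push_cast at hx2
    linarith
  have h4 : k * p₃ ≤ q := by nlinarith
  have hak : a < k := by
    have : (a : ℤ) < k := by
      have : (1 : ℤ) ≤ p₂ := by omega
      have : (0 : ℤ) < k := by omega
      by_contra hcon
      push Not at hcon
      nlinarith
    omega
  have hqR : (0 : ℝ) < q := by exact_mod_cast hq
  have hkR : (0 : ℝ) < k := by exact_mod_cast hk
  have h1R : (k : ℝ) * p₁ ≤ a * q := by exact_mod_cast h1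
  have h2R : (a : ℝ) * q ≤ k * (q - p₂) := by exact_mod_cast h2
  have h4R : (k : ℝ) * p₃ ≤ q := by exact_mod_cast h4
  refine ⟨a, k, ha, hak, hcop, ?_, ?_, ?_⟩ <;> rw [div_le_div_iff₀ hqR hkR] <;> linarith

lemma box_mono {a b c a' b' c' : ℝ} (ha : a ≤ a') (hb : b ≤ b') (hc : c ≤ c') :
    box a b c ⊆ box a' b' c' :=
  Set.prod_mono (Set.Icc_subset_Icc_right ha)
    (Set.prod_mono (Set.Icc_subset_Icc_right hb) (Set.Icc_subset_Icc_right hc))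

theorem CW_union_eq_JN_union :
    (⋃ (q : ℕ) (p₁ : ℕ) (p₂ : ℕ) (p₃ : ℕ) (_ : 0 < q) (_ : 0 < p₁) (_ : 0 < p₂)
        (_ : 0 < p₃) (_ : p₁ + p₂ + p₃ = q + 1),
      box ((p₁:ℝ)/q) ((p₂:ℝ)/q) ((p₃:ℝ)/q)) =
    (⋃ (a : ℕ) (m : ℕ) (_ : 0 < a) (_ : a < m) (_ : Nat.Coprime a m),
      (box ((a:ℝ)/m) (((m:ℝ)-a)/m) (1/(m:ℝ)) ∪
       box ((a:ℝ)/m) (1/(m:ℝ)) (((m:ℝ)-a)/m) ∪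
       box (1/(m:ℝ)) ((a:ℝ)/m) (((m:ℝ)-a)/m))) := by
  ext v
  simp only [Set.mem_iUnion, exists_prop, Set.mem_union]
  constructor
  · rintro ⟨q, p₁, p₂, p₃, hq, h1, h2, h3, hs, hv⟩
    have hmin : (p₃ ≤ p₁ ∧ p₃ ≤ p₂) ∨ (p₂ ≤ p₁ ∧ p₂ ≤ p₃) ∨ (p₁ ≤ p₂ ∧ p₁ ≤ p₃) := by omega
    rcases hmin with ⟨u, w⟩ | ⟨u, w⟩ | ⟨u, w⟩
    · obtain ⟨a, m, ha, ham, hc, e1, e2, e3⟩ :=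
        exists_coprime_dominating p₁ p₂ p₃ q h3 u w (by omega)
      exact ⟨a, m, ha, ham, hc, Or.inl (Or.inl (box_mono e1 e2 e3 hv))⟩
    · obtain ⟨a, m, ha, ham, hc, e1, e2, e3⟩ :=
        exists_coprime_dominating p₁ p₃ p₂ q h2 u w (by omega)
      exact ⟨a, m, ha, ham, hc, Or.inl (Or.inr (box_mono e1 e3 e2 hv))⟩
    · obtain ⟨a, m, ha, ham, hc, e1, e2, e3⟩ :=
        exists_coprime_dominating p₂ p₃ p₁ q h1 u w (by omega)
      exact ⟨a, m, ha, ham, hc, Or.inr (box_mono e3 e1 e2 hv)⟩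
  · rintro ⟨a, m, ha, ham, -, hv⟩
    have hcast : ((m - a : ℕ) : ℝ) = (m : ℝ) - a := Nat.cast_sub ham.le
    rw [← hcast, ← Nat.cast_one (R := ℝ)] at hv
    have hm : 0 < m := by omega
    have hma : 0 < m - a := by omega
    rcases hv with (hv | hv) | hv
    · exact ⟨m, a, m - a, 1, hm, ha, hma, one_pos, by omega, hv⟩
    · exact ⟨m, a, 1, m - a, hm, ha, one_pos, hma, by omega, hv⟩
    · exact ⟨m, 1, a, m - a, hm, one_pos, ha, hma, by omega, hv⟩
end

section
/- Let q, p₁, p₂, p₃ be natural numbers with p₁ + p₂ + p₃ = q + 1 and 2 ≤ p₁ ≤ p₂ ≤ p₃. Then there exist coprime positive integers m < n such that n·p₁ ≤ q and p₂/q ≤ m/n ≤ (q − p₃)/q (equivalently, the box Π(p₁/q, p₂/q, p₃/q) is contained in the good box Π(1/n, m/n, (n−m)/n)). -/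
/-!
Since `q - p₃ = p₁ + p₂ - 1`, the task is to find a reduced fraction with denominator at most
`N = ⌊q / p₁⌋` in the interval `I = [p₂ / q, (p₁ + p₂ - 1) / q]`. Descending the Stern–Brocot tree
from `0/1 < I < 1/1` either finds one, or traps `I` strictly between `a/b` and `c/d`, where
`b * c - a * d = 1` and `b + d > N` (`stern_brocot_descent`).

In the second case, comparing lengths gives `q ≥ (p₁ - 1) * b * d + b + d`. If `b, d ≥ 2`, then
`b * d ≥ 2 * (b + d) - 4` (and `b + d ≥ 5`, because `b = d = 2` is incompatible with determinant
one), which contradicts `q < p₁ * (N + 1)`. If `b = 1`, then `I` lies below `1/d` with `d ≥ N`,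
contradicting `p₂ ≥ p₁`. If `d = 1`, then `I` lies above `1 - 1/b ≥ 1/2`, contradicting
`2 * p₂ < q`.
-/

/-- Descent in the Stern–Brocot tree: an interval `[A / q, B / q]` strictly between two adjacent
fractions `a / b` and `c / d` either contains a reduced fraction of denominator at most `N`, or lies
strictly between two adjacent fractions whose mediant has denominator exceeding `N`. The number `k`
bounds the number of steps. -/
theorem stern_brocot_descent (q A B N : ℕ) (k : ℕ) : ∀ a b c d : ℕ, 0 < b → 0 < d →
    b * c = a * d + 1 → a * q < b * A → d * B < c * q → N < b + d + k →
    (∃ m n : ℕ, 0 < n ∧ n ≤ N ∧ Nat.Coprime m n ∧ n * A ≤ m * q ∧ m * q ≤ n * B) ∨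
    (∃ a b c d : ℕ, 0 < b ∧ 0 < d ∧ b * c = a * d + 1 ∧ a * q < b * A ∧ d * B < c * q ∧
      N < b + d) := by
  induction k with
  | zero =>
    intro a b c d hb hd hdet hA hB hN
    exact Or.inr ⟨a, b, c, d, hb, hd, hdet, hA, hB, by omega⟩
  | succ k ih =>
    intro a b c d hb hd hdet hA hB hN
    by_cases hs : N < b + d
    · exact Or.inr ⟨a, b, c, d, hb, hd, hdet, hA, hB, hs⟩
    by_cases h1 : (a + c) * q < (b + d) * A
    · exact ih (a + c) (b + d) c d (by omega) hd (by nlinarith) h1 hB (by omega)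
    by_cases h2 : (b + d) * B < (a + c) * q
    · exact ih a b (a + c) (b + d) hb (by omega) (by nlinarith) hA h2 (by omega)
    refine Or.inl ⟨a + c, b + d, by omega, by omega, ?_, by omega, by omega⟩
    rw [← Nat.isCoprime_iff_coprime]
    refine ⟨b, -a, ?_⟩
    have : (b : ℤ) * c = a * d + 1 := by exact_mod_cast hdet
    push_cast
    linarith

theorem good_box_exists (q p₁ p₂ p₃ : ℕ)
    (hsum : p₁ + p₂ + p₃ = q + 1) (h1 : 2 ≤ p₁) (h12 : p₁ ≤ p₂) (h23 : p₂ ≤ p₃) :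
    ∃ m n : ℕ, 0 < m ∧ m < n ∧ Nat.Coprime m n ∧
      n * p₁ ≤ q ∧ (p₂ : ℝ) / q ≤ (m : ℝ) / n ∧ (m : ℝ) / n ≤ ((q : ℝ) - p₃) / q := by
  -- `r = p₁ - 1` avoids truncated subtraction
  obtain ⟨r, rfl⟩ : ∃ r, p₁ = r + 1 := ⟨p₁ - 1, by omega⟩
  obtain ⟨N, hN⟩ : ∃ N, N = q / (r + 1) := ⟨_, rfl⟩
  have hNq : N * (r + 1) ≤ q := hN ▸ Nat.div_mul_le_self q (r + 1)
  have hqN : q < (N + 1) * (r + 1) := by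
    rw [hN, add_mul, one_mul]
    exact Nat.lt_div_mul_add (by omega)
  have hN2 : 2 ≤ N := by
    rw [hN, Nat.le_div_iff_mul_le (by omega)]
    omega
  have h2q : 2 * p₂ < q := by omega
  rcases stern_brocot_descent q p₂ (r + p₂) N N 0 1 1 1 one_pos one_pos (by omega) (by omega)
    (by omega) (by omega) with ⟨m, n, hn, hnN, hc, hA, hB⟩ | ⟨a, b, c, d, hb, hd, hdet, hA, hB, hs⟩
  · have hq : 0 < q := by omega
    refine ⟨m, n, ?_, ?_, hc, (Nat.mul_le_mul_right _ hnN).trans hNq, ?_, ?_⟩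
    · rcases Nat.eq_zero_or_pos m with rfl | h
      · have : 0 < n * p₂ := Nat.mul_pos hn (by omega)
        omega
      · exact h
    · by_contra h
      have h3 : n * q ≤ m * q := Nat.mul_le_mul_right _ (by omega)
      have h4 : n * (r + p₂) < n * q := Nat.mul_lt_mul_of_pos_left (by omega) hn
      omega
    · rw [div_le_div_iff₀ (by positivity) (by positivity)]
      have : (n : ℝ) * p₂ ≤ m * q := by exact_mod_cast hA
      linarith
    · have h3 : (q : ℝ) - p₃ = r + p₂ := by
        have : (r : ℝ) + 1 + p₂ + p₃ = q + 1 := by exact_mod_cast hsum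
        linarith
      rw [h3, div_le_div_iff₀ (by positivity) (by positivity)]
      have : (m : ℝ) * q ≤ n * (r + p₂) := by exact_mod_cast hB
      linarith
  · exfalso
    -- `(c/d - B/q) + (B/q - A/q) + (A/q - a/b) = 1/(bd)` for `I = [A/q, B/q]`, denominators cleared
    have hlen : r * (b * d) + b + d ≤ q := by
      have e1 := Nat.mul_le_mul_right d (Nat.succ_le_of_lt hA)
      have e2 := Nat.mul_le_mul_left b (Nat.succ_le_of_lt hB)
      have e3 : b * c * q = (a * d + 1) * q := by rw [hdet]
      simp only [Nat.succ_eq_add_one] at e1 e2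
      nlinarith
    rcases Nat.lt_or_ge b 2 with hb2 | hb2
    · obtain rfl : b = 1 := by omega
      have ha : a = 0 := by
        by_contra h
        have : 1 * q ≤ a * q := Nat.mul_le_mul_right _ (by omega)
        omega
      subst ha
      obtain rfl : c = 1 := by omega
      have e1 : N * (r + (r + 1)) ≤ d * (r + p₂) := Nat.mul_le_mul (by omega) (by omega)
      nlinarith
    rcases Nat.lt_or_ge d 2 with hd2 | hd2
    · obtain rfl : d = 1 := by omega
      have hc : 1 ≤ c := by
        by_contra h
        obtain rfl : c = 0 := by omega
        omega
      have e1 : b * 1 ≤ b * c := Nat.mul_le_mul_left _ hc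
      have e2 : b * q ≤ (a + 1) * q := Nat.mul_le_mul_right _ (by omega)
      nlinarith
    · have h5 : 5 ≤ b + d := by
        by_contra h
        obtain rfl : b = 2 := by omega
        obtain rfl : d = 2 := by omega
        omega
      have e1 : 2 * (b + d) ≤ b * d + 4 := by nlinarith
      have e2 := Nat.mul_le_mul_left r e1
      have e3 : (N + 1) * (r + 1) ≤ (b + d) * (r + 1) := Nat.mul_le_mul_right _ (by omega)
      nlinarith
end

section
/- Among the good parallelepipeds — the boxes Π(a/m, (m−a)/m, 1/m), Π(a/m, 1/m, (m−a)/m) and Π(1/m, a/m, (m−a)/m) over coprime integers 0 < a < m — no one is contained in another: if B₁ and B₂ are good parallelepipeds with B₁ ⊆ B₂, then B₁ = B₂. -/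
/-- A good parallelepiped: a box of the form `Π(a/m,(m-a)/m,1/m)` up to a
permutation of the coordinates, with `0 < a < m` coprime. -/
def IsGood (B : Set (ℝ × ℝ × ℝ)) : Prop :=
  ∃ a m : ℕ, 0 < a ∧ a < m ∧ Nat.Coprime a m ∧
    (B = box ((a:ℝ)/m) (((m:ℝ)-a)/m) (1/(m:ℝ)) ∨
     B = box ((a:ℝ)/m) (1/(m:ℝ)) (((m:ℝ)-a)/m) ∨
     B = box (1/(m:ℝ)) ((a:ℝ)/m) (((m:ℝ)-a)/m))

lemma le_of_box_subset {x y z x' y' z' : ℝ} (hx : 0 ≤ x) (hy : 0 ≤ y) (hz : 0 ≤ z)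
    (h : box x y z ⊆ box x' y' z') : x ≤ x' ∧ y ≤ y' ∧ z ≤ z' := by
  have hmem : (x, y, z) ∈ box x y z := ⟨⟨hx, le_rfl⟩, ⟨hy, le_rfl⟩, ⟨hz, le_rfl⟩⟩
  obtain ⟨h1, h2, h3⟩ := h hmem
  exact ⟨h1.2, h2.2, h3.2⟩

/-- Two pairs of fractions, each in lowest terms with sum `1`, coincide as soon as one pair
dominates the other. -/
lemma same_axis {p q b c : ℕ} (hp : 0 < p) (hb : 0 < b)
    (hpq : Nat.Coprime p (p + q)) (hbc : Nat.Coprime b (b + c))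
    (h1 : (p : ℝ) / (p + q) ≤ b / (b + c)) (h2 : (q : ℝ) / (p + q) ≤ c / (b + c)) :
    p = b ∧ q = c := by
  have hm : (0 : ℝ) < p + q := by positivity
  have hn : (0 : ℝ) < b + c := by positivity
  rw [div_le_div_iff₀ hm hn] at h1 h2
  have h1' : p * (b + c) ≤ b * (p + q) := by exact_mod_cast h1
  have h2' : q * (b + c) ≤ c * (p + q) := by exact_mod_cast h2
  have e : p * (b + c) = b * (p + q) := by nlinarith
  have d1 : p ∣ b := hpq.dvd_of_dvd_mul_right (e ▸ Dvd.intro _ rfl)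
  have d2 : b ∣ p := hbc.dvd_of_dvd_mul_right (e ▸ Dvd.intro _ rfl)
  obtain rfl := Nat.dvd_antisymm d1 d2
  have := Nat.eq_of_mul_eq_mul_left hp e
  exact ⟨rfl, by omega⟩

lemma cross_axis {p q b c : ℕ} (hp : 0 < p) (hb : 0 < b) (hc : 0 < c)
    (hpq : Nat.Coprime p (p + q)) (hbc : Nat.Coprime b (b + c))
    (h1 : (p : ℝ) / (p + q) ≤ b / (b + c)) (h2 : (q : ℝ) / (p + q) ≤ 1 / (b + c)) :
    p = b ∧ q = 1 ∧ c = 1 := by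
  have hm : (0 : ℝ) < p + q := by positivity
  have hn : (0 : ℝ) < b + c := by positivity
  have hc1 : c = 1 := by
    have h1' := h1
    have h2' := h2
    rw [div_le_div_iff₀ hm hn] at h1' h2'
    have k : (p + q : ℝ) * (b + c) ≤ (p + q) * (b + 1) := by linarith
    have k' : (c : ℝ) ≤ 1 := by linarith [le_of_mul_le_mul_left k hm]
    have : c ≤ 1 := by exact_mod_cast k'
    omega
  subst hc1
  obtain ⟨e1, e2⟩ := same_axis hp hb hpq hbc h1 (by simpa using h2)
  exact ⟨e1, e2, rfl⟩

/-- A good box in the symmetric parametrisation `m = p + q`, which avoids subtraction and treats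
the two numerators `p`, `q` alike. -/
lemma IsGood.exists_add {B : Set (ℝ × ℝ × ℝ)} (h : IsGood B) :
    ∃ p q : ℕ, 0 < p ∧ 0 < q ∧ Nat.Coprime p (p + q) ∧ Nat.Coprime q (q + p) ∧
      (B = box ((p : ℝ) / (p + q)) ((q : ℝ) / (p + q)) (1 / ((p : ℝ) + q)) ∨
       B = box ((p : ℝ) / (p + q)) (1 / ((p : ℝ) + q)) ((q : ℝ) / (p + q)) ∨
       B = box (1 / ((p : ℝ) + q)) ((p : ℝ) / (p + q)) ((q : ℝ) / (p + q))) := by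
  obtain ⟨a, m, ha, ham, hco, hB⟩ := h
  obtain ⟨q, rfl⟩ := Nat.exists_eq_add_of_lt ham
  refine ⟨a, q + 1, ha, by omega, hco, ?_, ?_⟩
  · have : Nat.Coprime a (q + 1) := by simpa [add_assoc] using hco
    simpa using this.symm
  · have e : ((a + q + 1 : ℕ) : ℝ) = a + (q + 1 : ℕ) := by push_cast; ring
    simpa only [e, add_sub_cancel_left] using hB

theorem good_boxes_incomparable (B₁ B₂ : Set (ℝ × ℝ × ℝ))
    (h₁ : IsGood B₁) (h₂ : IsGood B₂) (h : B₁ ⊆ B₂) : B₁ = B₂ := by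
  obtain ⟨p, q, hp, hq, hpq, hqp, H₁⟩ := h₁.exists_add
  obtain ⟨b, c, hb, hc, hbc, hcb, H₂⟩ := h₂.exists_add
  -- The four ways in which `p`, `q` and `b`, `c` can play the two roles in `cross_axis`.
  have X1 := cross_axis hp hb hc hpq hbc
  have X2 := cross_axis hp hc hb hpq hcb
  have X3 := cross_axis hq hb hc hqp hbc
  have X4 := cross_axis hq hc hb hqp hcb
  rw [add_comm (c : ℝ) b] at X2 X4
  rw [add_comm (q : ℝ) p] at X3 X4
  have S := same_axis hp hb hpq hbc
  rcases H₁ with rfl | rfl | rfl <;> rcases H₂ with rfl | rfl | rfl <;>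
    obtain ⟨l1, l2, l3⟩ :=
      le_of_box_subset (by positivity) (by positivity) (by positivity) h
  · obtain ⟨rfl, rfl⟩ := S l1 l2
    rfl
  · obtain ⟨rfl, rfl, rfl⟩ := X1 l1 l2
    simp
  · obtain ⟨rfl, rfl, rfl⟩ := X3 l2 l1
    simp [add_comm]
  · obtain ⟨rfl, rfl, rfl⟩ := X1 l1 l3
    simp
  · obtain ⟨rfl, rfl⟩ := S l1 l3
    rfl
  · obtain ⟨rfl, rfl, rfl⟩ := X4 l3 l1
    simp
  · obtain ⟨rfl, rfl, rfl⟩ := X2 l2 l3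
    simp [add_comm]
  · obtain ⟨rfl, rfl, rfl⟩ := X4 l3 l2
    simp
  · obtain ⟨rfl, rfl⟩ := S l2 l3
    rfl
end

section
/- For coprime integers 0 < p < q one has F(p/q, (q−p)/q) = (q+1)/q; equivalently, R_ab(p/q, 1 − p/q) − 1 = 1/q. -/
theorem F_on_antidiagonal (p q : ℕ) (hp : 0 < p) (hpq : p < q) (h : Nat.Coprime p q) :
    F ((p : ℝ) / q) (((q : ℝ) - p) / q) = ((q : ℝ) + 1) / q := by
  have hq : (0 : ℝ) < q := by exact_mod_cast hp.trans hpq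
  apply IsGreatest.csSup_eq
  constructor
  · refine ⟨q, hp.trans hpq, p, (q : ℤ) - p, ?_, ?_, ?_⟩
    · rw [mul_div_cancel₀ _ hq.ne']; simp
    · rw [mul_div_cancel₀ _ hq.ne']; simp
    · push_cast; ring
  · rintro t ⟨n, hn, a, b, ha, hb, rfl⟩
    have hnR : (0 : ℝ) < n := by exact_mod_cast hn
    rw [← mul_div_assoc, le_div_iff₀ hq] at ha hb
    have ha' : a * q ≤ (n : ℤ) * p := by exact_mod_cast ha
    have hb' : b * q ≤ (n : ℤ) * (q - p) := by exact_mod_cast hb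
    have hqZ : (0 : ℤ) < q := by exact_mod_cast hp.trans hpq
    have hab : a + b ≤ n := by
      refine le_of_mul_le_mul_right ?_ hqZ
      linarith
    rw [div_le_div_iff₀ hnR hq]
    rcases hab.lt_or_eq with hlt | heq
    · have h1 : (a : ℝ) + b + 1 ≤ n := by exact_mod_cast hlt
      nlinarith
    · have haq : a * q = (n : ℤ) * p := by
        refine le_antisymm ha' ?_
        have : (a + b) * (q : ℤ) = n * q := by rw [heq]
        linarith
      have hdvd : (q : ℤ) ∣ n * p := ⟨a, by rw [← haq, mul_comm]⟩
      have hdvd' : q ∣ n := h.symm.dvd_of_dvd_mul_right (by exact_mod_cast hdvd)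
      have hle : (q : ℝ) ≤ n := by exact_mod_cast Nat.le_of_dvd hn hdvd'
      have h1 : (a : ℝ) + b = n := by exact_mod_cast heq
      rw [h1]
      nlinarith
end

section
/- The projective transformation Q(x,y) = ( x/(1−y), (1−x)/(1−y) ) restricts to a bijection from Δ onto the set of pairs of coprime positive integers { (r,s) ∈ ℝ² : r, s ∈ ℕ, r ≥ 1, s ≥ 1, gcd(r,s) = 1 }; explicitly, Q sends the point (r/q, (q−1)/q) of Δ to (r, q−r). -/
/-- The projective transformation `Q`. -/
noncomputable def Q : ℝ × ℝ → ℝ × ℝ :=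
  fun p => (p.1 / (1 - p.2), (1 - p.1) / (1 - p.2))

/-- The explicit formula for `Q` holds for every nonzero denominator. -/
lemma Q_apply_vertex {q : ℕ} (hq : 0 < q) (r : ℕ) :
    Q ((r : ℝ) / q, ((q : ℝ) - 1) / q) = ((r : ℝ), (q : ℝ) - r) := by
  have hq' : (q : ℝ) ≠ 0 := by positivity
  have h : 1 - ((q : ℝ) - 1) / q = 1 / q := by field_simp; ring
  simp only [Q, h, Prod.mk.injEq]
  constructor <;> field_simp

theorem Q_bijects_Delta_onto_coprime_pairs :
    Set.BijOn Q Delta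
      {p : ℝ × ℝ | ∃ r s : ℕ, 1 ≤ r ∧ 1 ≤ s ∧ Nat.Coprime r s ∧ p = ((r : ℝ), (s : ℝ))} ∧
    ∀ q r : ℕ, 0 < r → r < q → Nat.Coprime r q →
      Q ((r : ℝ) / q, ((q : ℝ) - 1) / q) = ((r : ℝ), (q : ℝ) - r) := by
  refine ⟨⟨?_, ?_, ?_⟩, fun q r _ hrq _ => Q_apply_vertex (by omega) r⟩
  · rintro _ ⟨q, r, hr, hrq, hc, rfl⟩
    refine ⟨r, q - r, hr, by omega, (Nat.coprime_sub_self_right hrq.le).2 hc, ?_⟩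
    rw [Q_apply_vertex (by omega), Nat.cast_sub hrq.le]
  · rintro _ ⟨q, r, hr, hrq, hc, rfl⟩ _ ⟨q', r', hr', hrq', hc', rfl⟩ h
    rw [Q_apply_vertex (by omega), Q_apply_vertex (by omega), Prod.mk.injEq] at h
    have h1 : (r : ℝ) = r' := h.1
    have h2 : (q : ℝ) = q' := by linarith [h.2]
    rw [h1, h2]
  · rintro _ ⟨r, s, hr, hs, hc, rfl⟩
    refine ⟨_, ⟨r + s, r, hr, by omega, by simpa using hc, rfl⟩, ?_⟩
    rw [Q_apply_vertex (by omega)]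
    simp
end

section
/- For every integer n ≥ 2, no projection to the xy-plane of a vertex of the ab-ziggurat lies in the open triangle Δₙ; that is, for all coprime integers 0 < a < m, none of the points ((m−a)/m, a/m), (a/m, (m−1)/m) and ((m−1)/m, a/m) belongs to Δₙ. -/
/-!
Clearing denominators turns each membership into inequalities between integers. The coordinates
of the first point sum to exactly `1`. For the second point, `y < n / (n + 1)` says `m < n + 1`,
while `x < 1 / n` says `a * n < m`, so `n ≤ a * n < m ≤ n`. For the third, `x = 1 - 1 / m ≥ 1 / 2`
since `m ≥ 2`, which contradicts `x < 1 / n ≤ 1 / 2`.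
-/

/-- The open triangle `Δₙ`. -/
def Tri (n : ℕ) : Set (ℝ × ℝ) :=
  {p | 0 ≤ p.1 ∧ p.1 < 1 ∧ 0 ≤ p.2 ∧ p.2 < 1 ∧ 1 < p.1 + p.2 ∧
    p.1 < 1 / (n : ℝ) ∧ p.2 < (n : ℝ) / ((n : ℝ) + 1)}

theorem no_vertex_projection_in_triangle (n : ℕ) (hn : 2 ≤ n)
    (a m : ℕ) (ha : 0 < a) (ham : a < m) (h : Nat.Coprime a m) :
    ((((m : ℝ) - a) / m, (a : ℝ) / m) : ℝ × ℝ) ∉ Tri n ∧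
    (((a : ℝ) / m, ((m : ℝ) - 1) / m) : ℝ × ℝ) ∉ Tri n ∧
    ((((m : ℝ) - 1) / m, (a : ℝ) / m) : ℝ × ℝ) ∉ Tri n := by
  have hm : (0 : ℝ) < m := by exact_mod_cast ha.trans ham
  have hn0 : (0 : ℝ) < n := by exact_mod_cast (by omega : 0 < n)
  refine ⟨?_, ?_, ?_⟩
  · rintro ⟨-, -, -, -, hsum, -, -⟩
    dsimp only at hsum
    rw [← add_div, sub_add_cancel, div_self hm.ne'] at hsum
    exact lt_irrefl _ hsum
  · rintro ⟨-, -, -, -, -, hx, hy⟩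
    dsimp only at hx hy
    rw [div_lt_div_iff₀ hm hn0] at hx
    rw [div_lt_div_iff₀ hm (by positivity)] at hy
    have hx' : a * n < m := by
      have : (a : ℝ) * n < m := by linarith
      exact_mod_cast this
    have hy' : m < n + 1 := by
      have : (m : ℝ) < n + 1 := by linarith
      exact_mod_cast this
    have : n ≤ a * n := Nat.le_mul_of_pos_left n ha
    omega
  · rintro ⟨-, -, -, -, -, hx, -⟩
    dsimp only at hx
    rw [div_lt_div_iff₀ hm hn0] at hx
    have hm2 : (2 : ℝ) ≤ m := by exact_mod_cast (by omega : 2 ≤ m)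
    have hn2 : (2 : ℝ) ≤ n := by exact_mod_cast hn
    nlinarith [mul_le_mul_of_nonneg_left hn2 (by linarith : (0 : ℝ) ≤ m - 1)]
end
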